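/- Forcing among over-rotation pairs is a linear (total) ordering: for any two pairs of positive integers (p, q) and (r, s) with 2p ≤ q and 2r ≤ s, either every continuous interval map having a cycle with over-rotation pair (p, q) also has a cycle with over-rotation pair (r, s), or every continuous interval map having a cycle with over-rotation pair (r, s) also has a cycle with over-rotation pair (p, q). -/

import Mathlib

open Function

/-- The number of sign changes of `f y - y` as `y` runs along the cyclic sequence
`x, f x, …, f^[q-1] x, f^[q] x (= x)`. -/
noncomputable def overCount (f : ℝ → ℝ) (x : ℝ) (q : ℕ) : ℕ :=
  ((Finset.range q).filter fun i =>
    (f (f^[i] x) - f^[i] x) * (f (f^[i + 1] x) - f^[i + 1] x) < 0).card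

/-- `f` has a cycle in `I` with over-rotation pair `(p, q)`. -/
def HasOverPair (f : ℝ → ℝ) (I : Set ℝ) (p q : ℕ) : Prop :=
  ∃ x ∈ I, minimalPeriod f x = q ∧ overCount f x q = 2 * p

/-- The over-rotation pair `(p, q)` forces the over-rotation pair `(r, s)`: every
continuous map of a closed interval into itself having a cycle with over-rotation pair
`(p, q)` also has a cycle with over-rotation pair `(r, s)`. -/
def OrpForces (p q r s : ℕ) : Prop :=
  ∀ a b : ℝ, a ≤ b → ∀ f : ℝ → ℝ, ContinuousOn f (Set.Icc a b) →
    Set.MapsTo f (Set.Icc a b) (Set.Icc a b) →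
    HasOverPair f (Set.Icc a b) p q → HasOverPair f (Set.Icc a b) r s

/-!
Centre `f` at a fixed point `z` such that every orbit point up to the lowest decreasing one moves
towards `z`, and truncate the centred map so that no point moves away from `0`. Cycles of `f`
turning around `z` are then cycles of the centred map avoiding `0`, and half their number of sign
changes is the first entry of the over-rotation pair. If an orbit point above `z` moves away
from `z`, the orbit escapes beyond a further fixed point `ζ`. Closing the escape at `ζ` gives a
loop which can wait at `ζ`, hence has arbitrarily low over-rotation number.

To reach a larger over-rotation number `k / l`, dilute the orbit by an alternating loop near `0`
until signs change exactly `2 * k` times per `l` steps on average. Record at each time the deviation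
from this rate together with the sign, and always continue from the point nearest to `0` with the
same record: some window of length `l` closes up. Unless the sign pattern is `l`-periodic, the
original loop leaves this short one, and the points of departure cover each other along its sign
pattern. The return map therefore has a horseshoe, and there are cycles with over-rotation pair
`(m * k, m * l)` for all `m > 0`.

Among pairs with the same over-rotation number `k / l`, only `l`-periodic sign patterns remain. For
these, the return map along the pattern reduces the forcing of `(m * k, m * l)` by `(n * k, n * l)`
to that of the period `m` by the period `n`. Totality of Sharkovskii's relation follows from
the cases already settled by simultaneously halving even periods.
-/

namespace OverRotation

open Set SignType

section Minimal

variable {α β : Type*} {f : α → α} {g : β → β} {x : α} {y : β}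

lemma minimalPeriod_eq_of_injective {e : β → α} (he : Injective e)
    (h : ∀ i, f^[i] x = e (g^[i] y)) : minimalPeriod f x = minimalPeriod g y :=
  minimalPeriod_eq_minimalPeriod_iff.2 fun i => by
    have h0 : x = e y := h 0
    simp only [IsPeriodicPt, IsFixedPt, h i]
    exact h0 ▸ he.eq_iff

lemma minimalPeriod_eq_of_ne {m : ℕ} (hm : 0 < m) (h : f^[m] x = x)
    (hne : ∀ i, 0 < i → i < m → f^[i] x ≠ x) : minimalPeriod f x = m := by
  have hper : IsPeriodicPt f m x := h
  refine (hper.minimalPeriod_le hm).antisymm (not_lt.1 fun hlt => ?_)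
  exact hne _ (hper.minimalPeriod_pos hm) hlt iterate_minimalPeriod

end Minimal

section Horseshoe

variable {g : ℝ → ℝ} {s e : ℝ}

lemma iterate_lt_of_iterate_min_ne (hs : s ≤ g s) {t : ℝ} {n : ℕ}
    (hn : (fun x => min s (g x))^[n] t ≠ s) :
    g^[n] t = (fun x => min s (g x))^[n] t ∧ ∀ i, 0 < i → i ≤ n → g^[i] t < s := by
  induction n with
  | zero => exact ⟨rfl, fun i h0 hi => by omega⟩
  | succ n ih =>
    rw [iterate_succ_apply'] at hn
    obtain ⟨heq, hlt⟩ := ih fun h => hn (by simp only [h, min_eq_left hs])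
    have hlt' : g^[n + 1] t < s := by
      rw [iterate_succ_apply', heq]
      exact not_le.1 fun h => hn (min_eq_left h)
    refine ⟨?_, fun i h0 hi => ?_⟩
    · rw [iterate_succ_apply', iterate_succ_apply', ← heq]
      exact (min_eq_right (iterate_succ_apply' g n t ▸ hlt'.le)).symm
    · rcases hi.lt_or_eq with hi | rfl
      · exact hlt i h0 (by omega)
      · exact hlt'

/-- Iterating `min s ∘ g` makes `s` absorbing, so a point returning to `t > s` at time `m` has
stayed below `s` in between. -/
lemma exists_minimalPeriod_eq_of_horseshoe (hg : Continuous g) (h0 : g 0 = 0) (hs : 0 < s)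
    (hse : s < e) (hgs : e ≤ g s) (hge : g e = 0) {m : ℕ} (hm : 0 < m) :
    ∃ t, 0 < t ∧ minimalPeriod g t = m := by
  obtain ⟨n, rfl⟩ : ∃ n, m = n + 1 := ⟨m - 1, by omega⟩
  have hs' : s ≤ g s := hse.le.trans hgs
  let a : ℝ → ℝ := fun x => min s (g x)
  have ha_s : a^[n] s = s := iterate_fixed (show a s = s from min_eq_left hs') n
  have hga_e : g (a^[n] e) = 0 := by
    cases n with
    | zero => exact hge
    | succ k =>
      have ha_e : a e = 0 := by simp only [a, hge, min_eq_right hs.le]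
      have ha_0 : a 0 = 0 := by simp only [a, h0, min_eq_right hs.le]
      rw [iterate_succ_apply, ha_e, iterate_fixed ha_0, h0]
  have hcont : Continuous fun t => g (a^[n] t) - t := by
    have := (show Continuous a by fun_prop).iterate n
    fun_prop
  obtain ⟨t, ⟨hst, hte⟩, ht⟩ := intermediate_value_Icc' hse.le hcont.continuousOn
    (show (0 : ℝ) ∈ Icc _ _ from ⟨by rw [hga_e]; linarith, by rw [ha_s]; linarith⟩)
  have ht : g (a^[n] t) = t := sub_eq_zero.1 ht
  have hne : a^[n] t ≠ s := fun h => by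
    rw [h] at ht
    obtain rfl : t = e := hte.antisymm (hgs.trans ht.le)
    linarith [h ▸ hga_e]
  have hst' : s < t := hst.lt_of_ne fun h => hne (h ▸ ha_s)
  obtain ⟨heq, hlt⟩ := iterate_lt_of_iterate_min_ne hs' hne
  refine ⟨t, hs.trans hst', minimalPeriod_eq_of_ne hm ?_ fun i hi him => ?_⟩
  · rw [iterate_succ_apply', heq, ht]
  · exact ((hlt i hi (by omega)).trans hst').ne

end Horseshoe

lemma eq_of_modEq_of_periodic {α : Type*} {σ : ℕ → α} {l : ℕ} (hσ : Periodic σ l)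
    {i j : ℕ} (h : i ≡ j [MOD l]) : σ i = σ j := by
  rw [← hσ.map_mod_nat i, ← hσ.map_mod_nat j, h]

section Changes

variable {α β : Type*} [DecidableEq α] [DecidableEq β] {σ τ : ℕ → α} {l N : ℕ}

/-- The number of indices `i < N` at which the sequence `σ` changes its value between `i` and
`i + 1`. For sequences of signs these are the sign changes. -/
def changes (σ : ℕ → α) (N : ℕ) : ℕ := Nat.count (fun i => σ (i + 1) ≠ σ i) N

@[simp]
lemma changes_zero (σ : ℕ → α) : changes σ 0 = 0 := Nat.count_zero _

lemma changes_succ (σ : ℕ → α) (N : ℕ) :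
    changes σ (N + 1) = changes σ N + if σ (N + 1) ≠ σ N then 1 else 0 := Nat.count_succ _ _

lemma changes_le (σ : ℕ → α) (N : ℕ) : changes σ N ≤ N := Nat.count_le _

lemma changes_add (σ : ℕ → α) (M N : ℕ) :
    changes σ (M + N) = changes σ M + changes (fun i => σ (M + i)) N := Nat.count_add _ _ _

lemma changes_congr (h : ∀ i ≤ N, σ i = τ i) : changes σ N = changes τ N := by
  induction N with
  | zero => rfl
  | succ N ih =>
    rw [changes_succ, changes_succ, ih fun i hi => h i (by omega), h N (by omega), h _ le_rfl]

lemma changes_comp {φ : α → β} (hφ : Injective φ) (σ : ℕ → α) (N : ℕ) :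
    changes (fun i => φ (σ i)) N = changes σ N := by
  simp only [changes, ne_eq, hφ.eq_iff]

lemma changes_eq_self_of_forall_ne (h : ∀ i < N, σ (i + 1) ≠ σ i) : changes σ N = N :=
  (Nat.count_iff_forall).2 fun {i} hi => h i hi

lemma changes_eq_zero_iff : changes σ N = 0 ↔ ∀ i ≤ N, σ i = σ 0 := by
  refine ⟨fun h i => ?_, fun h => ?_⟩
  · induction i with
    | zero => exact fun _ => rfl
    | succ i ih =>
      intro hi
      have hstep : σ (i + 1) = σ i := not_not.1 (Nat.count_iff_forall_not.1 h _ hi)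
      exact hstep.trans (ih (by omega))
  · exact (Nat.count_iff_forall_not).2 fun {i} hi =>
      not_not.2 ((h _ hi).trans (h _ hi.le).symm)

lemma changes_shift (hσ : Periodic σ N) (j : ℕ) : changes (fun i => σ (j + i)) N = changes σ N := by
  have h := changes_add σ N j
  simp only [Nat.add_comm N, hσ _, changes_add σ j N] at h
  exact Nat.add_left_cancel (h.trans (Nat.add_comm _ _))

lemma changes_mul (hσ : Periodic σ N) (a : ℕ) : changes σ (a * N) = a * changes σ N := by
  induction a with
  | zero => simp only [Nat.zero_mul, changes_zero]
  | succ a ih => rw [Nat.succ_mul, changes_add, ih, changes_shift hσ, Nat.succ_mul]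

lemma even_changes_iff {σ : ℕ → SignType} (hσ0 : ∀ i, σ i ≠ 0) (N : ℕ) :
    Even (changes σ N) ↔ σ N = σ 0 := by
  have flip : ∀ a b c : SignType, a ≠ 0 → b ≠ 0 → c ≠ 0 → b ≠ a → (¬ a = c ↔ b = c) := by decide
  induction N with
  | zero => simp
  | succ N ih =>
    rw [changes_succ]
    split_ifs with h
    · exact (Nat.even_add_one.trans (not_congr ih)).trans (flip _ _ _ (hσ0 _) (hσ0 _) (hσ0 _) h)
    · rwa [not_not.1 h]

/-- The number of changes per step is `2 * k / l`, a fraction whose denominator `l` divides every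
period up to the parity of the changes. -/
lemma dvd_of_periodic_of_changes_eq {σ : ℕ → SignType} (hσ0 : ∀ i, σ i ≠ 0) (hl : Periodic σ l)
    {e k : ℕ} (he : Periodic σ e) (h : changes σ l = 2 * k) (hkl : k.Coprime l) : l ∣ e := by
  obtain ⟨c, hc⟩ := (even_changes_iff hσ0 e).2 he.eq
  have heq : l * c = e * k := by
    have h1 := changes_mul hl e
    have h2 := changes_mul he l
    rw [Nat.mul_comm e l, h2, hc, h] at h1
    linarith
  exact hkl.symm.dvd_of_dvd_mul_right (Dvd.intro _ heq)

end Changes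

section Patterns

/-- One step of `F` along the sign pattern `σ`, read on absolute values: the point of absolute
value `t` and sign `σ i` is sent to the absolute value of its image if the latter has sign
`σ (i + 1)`, and to `0` otherwise. -/
noncomputable def patternStep (F : ℝ → ℝ) (σ : ℕ → SignType) (i : ℕ) (t : ℝ) : ℝ :=
  max 0 (σ (i + 1) * F (σ i * t))

/-- The composition of `n` consecutive steps of `F` along the sign pattern `σ`, starting at the
index `j`. -/
noncomputable def patternMap (F : ℝ → ℝ) (σ : ℕ → SignType) (j : ℕ) : ℕ → ℝ → ℝ
  | 0, t => t
  | n + 1, t => patternStep F σ (j + n) (patternMap F σ j n t)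

/-- `F` maps the interval `[0, a]` over `[0, b]` in `d` steps along the sign pattern `σ`, starting
at the index `i`. -/
def Covers (F : ℝ → ℝ) (σ : ℕ → SignType) (i d : ℕ) (a b : ℝ) : Prop :=
  ∃ t ∈ Icc 0 a, b ≤ patternMap F σ i d t

variable {F : ℝ → ℝ} {σ : ℕ → SignType} {i j l m n : ℕ} {a b c t : ℝ}

lemma continuous_patternMap (hF : Continuous F) (σ : ℕ → SignType) (j n : ℕ) :
    Continuous (patternMap F σ j n) := by
  induction n with
  | zero => exact continuous_id
  | succ n ih =>
    have hstep : Continuous (patternStep F σ (j + n)) := by unfold patternStep; fun_prop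
    exact hstep.comp ih

lemma patternMap_zero_right (hF0 : F 0 = 0) (σ : ℕ → SignType) (j n : ℕ) :
    patternMap F σ j n 0 = 0 := by
  induction n with
  | zero => rfl
  | succ n ih => simp [patternMap, ih, patternStep, hF0]

lemma patternMap_nonneg (F : ℝ → ℝ) (σ : ℕ → SignType) (j n : ℕ) (ht : 0 ≤ t) :
    0 ≤ patternMap F σ j n t := by
  cases n with
  | zero => exact ht
  | succ n => exact le_max_left _ _

lemma patternMap_add (F : ℝ → ℝ) (σ : ℕ → SignType) (j m n : ℕ) (t : ℝ) :
    patternMap F σ j (m + n) t = patternMap F σ (j + m) n (patternMap F σ j m t) := by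
  induction n with
  | zero => rfl
  | succ n ih => rw [← Nat.add_assoc, patternMap, patternMap, ih, Nat.add_assoc]

lemma patternMap_add_period (hσ : Periodic σ l) (j n : ℕ) (t : ℝ) :
    patternMap F σ (j + l) n t = patternMap F σ j n t := by
  induction n with
  | zero => rfl
  | succ n ih =>
    rw [patternMap, patternMap, ih, patternStep, patternStep, Nat.add_right_comm j l n,
      Nat.add_right_comm (j + n) l 1, hσ, hσ]

lemma patternMap_mul (hσ : Periodic σ l) (j n : ℕ) (t : ℝ) :
    patternMap F σ j (l * n) t = (patternMap F σ j l)^[n] t := by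
  induction n generalizing t with
  | zero => rfl
  | succ n ih =>
    rw [Nat.mul_succ, Nat.add_comm, patternMap_add, patternMap_add_period hσ, ih,
      iterate_succ_apply]

lemma patternMap_eq_zero_of_le (hF0 : F 0 = 0) (h : patternMap F σ j m t = 0) (hmn : m ≤ n) :
    patternMap F σ j n t = 0 := by
  obtain ⟨d, rfl⟩ := Nat.exists_eq_add_of_le hmn
  rw [patternMap_add, h, patternMap_zero_right hF0]

lemma Covers.trans (hF : Continuous F) (hF0 : F 0 = 0) (h : Covers F σ i m a b)
    (h' : Covers F σ (i + m) n b c) : Covers F σ i (m + n) a c := by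
  obtain ⟨y, ⟨hy0, hyb⟩, hc⟩ := h'
  obtain ⟨t, ⟨ht0, hta⟩, hbt⟩ := h
  obtain ⟨x, ⟨hx0, hxt⟩, rfl⟩ := intermediate_value_Icc ht0
    (continuous_patternMap hF σ i m).continuousOn
    (show y ∈ Icc _ _ from ⟨by rwa [patternMap_zero_right hF0], hyb.trans hbt⟩)
  exact ⟨x, ⟨hx0, hxt.trans hta⟩, by rwa [patternMap_add]⟩

/-- If `[0, e]` is covered by itself after `r` passes, then some single pass covers it, because
otherwise every pass would stay strictly below `e`. -/
lemma exists_minimalPeriod_patternMap_eq (hF : Continuous F) (hF0 : F 0 = 0) (hσ : Periodic σ l)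
    {e : ℝ} (he : 0 < e) (hstep : patternStep F σ j e = 0) {r : ℕ} (hl : 0 < l)
    (hcov : Covers F σ j (l * r) e e) (hr : 0 < r) (hm : 0 < m) :
    ∃ t, 0 < t ∧ minimalPeriod (patternMap F σ j l) t = m := by
  have hg0 := patternMap_zero_right hF0 σ j l
  have hge : patternMap F σ j l e = 0 :=
    patternMap_eq_zero_of_le (m := 1) hF0 hstep hl
  obtain ⟨s, ⟨hs0, hse⟩, hes⟩ : ∃ s ∈ Icc 0 e, e ≤ patternMap F σ j l s := by
    by_contra! hlt
    have hmaps : MapsTo (patternMap F σ j l) (Icc 0 e) (Icc 0 e) := fun s hs =>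
      ⟨patternMap_nonneg F σ j l hs.1, (hlt s hs).le⟩
    obtain ⟨t, ht, hte⟩ := hcov
    obtain ⟨n, rfl⟩ : ∃ n, r = n + 1 := ⟨r - 1, by omega⟩
    rw [patternMap_mul hσ, iterate_succ_apply'] at hte
    exact hte.not_gt (hlt _ (hmaps.iterate n ht))
  refine exists_minimalPeriod_eq_of_horseshoe (continuous_patternMap hF σ j l) hg0
    (hs0.lt_of_ne ?_) (hse.lt_of_ne ?_) hes hge hm
  · rintro rfl
    linarith
  · rintro rfl
    linarith

end Patterns

section CyclesAboutZero

/-- `F` has a cycle of period `q` that avoids `0` and changes sign `2 * p` times per period. If `F`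
moves no point away from `0` and `2 ≤ q`, this cycle has over-rotation pair `(p, q)`, because its
points move to the right exactly when they are negative. -/
def HasCycleAboutZero (F : ℝ → ℝ) (p q : ℕ) : Prop :=
  ∃ x, minimalPeriod F x = q ∧ (∀ i, F^[i] x ≠ 0) ∧ changes (fun i => sign (F^[i] x)) q = 2 * p

variable {F : ℝ → ℝ} {σ : ℕ → SignType} {j k l m : ℕ} {t : ℝ}

lemma coe_ne_zero {s : SignType} (hs : s ≠ 0) : (s : ℝ) ≠ 0 := by
  rcases s.trichotomy with rfl | rfl | rfl <;> simp_all

lemma sign_coe (s : SignType) : sign (s : ℝ) = s := by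
  rcases s.trichotomy with rfl | rfl | rfl <;> simp

lemma coe_mul_self {s : SignType} (hs : s ≠ 0) : (s : ℝ) * s = 1 := by
  rcases s.trichotomy with rfl | rfl | rfl <;> simp_all

lemma iterate_eq_of_patternMap_pos (hσ0 : ∀ i, σ i ≠ 0) (hpos : ∀ n, 0 < patternMap F σ j n t)
    (n : ℕ) : F^[n] (σ j * t) = σ (j + n) * patternMap F σ j n t := by
  induction n with
  | zero => rfl
  | succ n ih =>
    have hstep : patternMap F σ j (n + 1) t =
        σ (j + n + 1) * F (σ (j + n) * patternMap F σ j n t) :=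
      max_eq_right ((lt_max_iff.1 (hpos (n + 1))).resolve_left (lt_irrefl _)).le
    rw [iterate_succ_apply', ih, hstep, ← mul_assoc, ← Nat.add_assoc, coe_mul_self (hσ0 _), one_mul]

lemma patternMap_pos_of_isPeriodicPt (hF0 : F 0 = 0) (hσ : Periodic σ l) (hl : 0 < l) (hm : 0 < m)
    (ht : 0 < t) (hper : IsPeriodicPt (patternMap F σ j l) m t) (n : ℕ) :
    0 < patternMap F σ j n t := by
  refine (patternMap_nonneg F σ j n ht.le).lt_of_ne fun hzero => ht.ne' ?_
  have hle : n ≤ l * (m * n) := by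
    rw [← Nat.mul_assoc]
    exact Nat.le_mul_of_pos_left n (Nat.mul_pos hl hm)
  rw [← patternMap_eq_zero_of_le hF0 hzero.symm hle, patternMap_mul hσ, (hper.mul_const n).eq]

lemma hasCycleAboutZero_of_minimalPeriod_patternMap (hF0 : F 0 = 0) (hσ0 : ∀ i, σ i ≠ 0)
    (hσ : Periodic σ l) (hchanges : changes σ l = 2 * k) (hkl : k.Coprime l) (hl : 0 < l)
    (hm : 0 < m) (ht : 0 < t) (hmin : minimalPeriod (patternMap F σ j l) t = m) :
    HasCycleAboutZero F (m * k) (m * l) := by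
  have hpos := patternMap_pos_of_isPeriodicPt hF0 hσ hl hm ht
    (hmin ▸ isPeriodicPt_minimalPeriod _ t)
  have horbit := iterate_eq_of_patternMap_pos hσ0 hpos
  have hsign : ∀ i, sign (F^[i] (σ j * t)) = σ (j + i) := fun i => by
    rw [horbit, sign_mul, sign_pos (hpos i), mul_one, sign_coe]
  have hσj : Periodic (fun i => σ (j + i)) l := hσ.const_add j
  have hchangesj : changes (fun i => σ (j + i)) l = 2 * k := (changes_shift hσ j).trans hchanges
  have hreturn : ∀ a, F^[l * a] (σ j * t) = σ j * (patternMap F σ j l)^[a] t := fun a => by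
    have hσa : σ (j + l * a) = σ j :=
      eq_of_modEq_of_periodic hσ (Nat.add_modEq_left_iff.2 (Nat.dvd_mul_right l a))
    rw [horbit, patternMap_mul hσ, hσa]
  refine ⟨σ j * t, Nat.dvd_antisymm ?_ ?_, fun i => ?_, ?_⟩
  · refine IsPeriodicPt.minimalPeriod_dvd ?_
    rw [IsPeriodicPt, IsFixedPt, Nat.mul_comm m l, hreturn, ← hmin, iterate_minimalPeriod]
  · have hfix := iterate_minimalPeriod (f := F) (x := σ j * t)
    obtain ⟨a, ha⟩ : l ∣ minimalPeriod F (σ j * t) :=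
      dvd_of_periodic_of_changes_eq (fun i => hσ0 (j + i)) hσj
        (fun i => by simp only [← hsign, iterate_add_apply, hfix]) hchangesj hkl
    rw [ha, hreturn] at hfix
    have hma : m ∣ a := hmin ▸ IsPeriodicPt.minimalPeriod_dvd
      (mul_left_cancel₀ (coe_ne_zero (hσ0 j)) hfix)
    rw [ha, Nat.mul_comm m l]
    exact Nat.mul_dvd_mul_left l hma
  · rw [horbit]
    exact mul_ne_zero (coe_ne_zero (hσ0 _)) (hpos i).ne'
  · simp only [hsign, changes_mul hσj, hchangesj]
    ring

end CyclesAboutZero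

section PseudoOrbits

/-- `F` may be deformed so as to send `a` to `b`, in the sense that `b` lies between `0` (excluded)
and `F a`. Loops of such steps carry the covering relations from which cycles are found. -/
def IsPseudoStep (F : ℝ → ℝ) (a b : ℝ) : Prop := b ≠ 0 ∧ |b| ≤ sign b * F a

/-- A pseudo-orbit `u` of `F` which is periodic with period `N`, not necessarily minimal. -/
structure IsPseudoCycle (F : ℝ → ℝ) (u : ℕ → ℝ) (N : ℕ) : Prop where
  pos : 0 < N
  step : ∀ t, IsPseudoStep F (u t) (u (t + 1))
  periodic : Periodic u N

variable {F : ℝ → ℝ} {σ : ℕ → SignType} {u : ℕ → ℝ} {a b c : ℝ} {i j d τ N : ℕ}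

lemma isPseudoStep_apply (h : F a ≠ 0) : IsPseudoStep F a (F a) := ⟨h, (sign_mul_self (F a)).ge⟩

lemma IsPseudoStep.mono (h : IsPseudoStep F a b) (hsign : sign c = sign b) (hc : |c| ≤ |b|) :
    IsPseudoStep F a c :=
  ⟨sign_ne_zero.1 (hsign ▸ sign_ne_zero.2 h.1), hsign ▸ hc.trans h.2⟩

lemma IsPseudoStep.abs_le_patternStep (h : IsPseudoStep F a b) (ha : sign a = σ i)
    (hb : sign b = σ (i + 1)) : |b| ≤ patternStep F σ i |a| := by
  rw [patternStep, ← ha, ← hb, sign_mul_abs]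
  exact le_max_of_le_right h.2

lemma IsPseudoStep.patternStep_eq_zero (h : IsPseudoStep F a b) (hσ : σ (i + 1) ≠ 0)
    (ha : sign a = σ i) (hb : sign b ≠ σ (i + 1)) : patternStep F σ i |a| = 0 := by
  have hflip : ∀ s s' : SignType, s ≠ 0 → s' ≠ 0 → s ≠ s' → s' = -s := by decide
  rw [patternStep, ← ha, hflip _ _ (sign_ne_zero.2 h.1) hσ hb, sign_mul_abs, coe_neg]
  exact max_eq_left (by linarith [h.2, abs_nonneg b])

lemma IsPseudoCycle.ne_zero (hu : IsPseudoCycle F u N) (t : ℕ) : u t ≠ 0 := by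
  obtain ⟨M, rfl⟩ : ∃ M, N = M + 1 := ⟨N - 1, (Nat.sub_add_cancel hu.pos).symm⟩
  exact hu.periodic t ▸ (hu.step (t + M)).1

lemma IsPseudoCycle.sign_ne_zero (hu : IsPseudoCycle F u N) (t : ℕ) : sign (u t) ≠ 0 :=
  _root_.sign_ne_zero.2 (hu.ne_zero t)

lemma IsPseudoCycle.periodic_sign (hu : IsPseudoCycle F u N) : Periodic (fun t => sign (u t)) N :=
  hu.periodic.comp fun x => sign x

lemma finite_range_of_periodic {α : Type*} {u : ℕ → α} (hu : Periodic u N) (hN : 0 < N) :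
    (range u).Finite := by
  refine ((finite_Iio N).image u).subset ?_
  rintro _ ⟨t, rfl⟩
  exact ⟨t % N, Nat.mod_lt t hN, hu.map_mod_nat t⟩

lemma covers_of_sign_eq (hF : Continuous F) (hF0 : F 0 = 0)
    (hu : ∀ t, IsPseudoStep F (u t) (u (t + 1))) (ha : |u τ| ≤ a)
    (hsign : ∀ i ≤ d, sign (u (τ + i)) = σ (j + i)) : Covers F σ j d a |u (τ + d)| := by
  induction d with
  | zero => exact ⟨|u τ|, ⟨abs_nonneg _, ha⟩, le_rfl⟩
  | succ d ih =>
    exact (ih fun i hi => hsign i (by omega)).trans hF hF0 ⟨|u (τ + d)|, ⟨abs_nonneg _, le_rfl⟩,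
      (hu (τ + d)).abs_le_patternStep (hsign d (by omega)) (hsign (d + 1) le_rfl)⟩

end PseudoOrbits

section NearestLoops

variable {α : Type*}

/-- A labelling `st` of the times of the sequence `u` by states. The state at a time determines the
sign of `u` at that time, and together with the next sign it determines the next state. -/
structure IsSignCoding (u : ℕ → ℝ) (st : ℕ → α) : Prop where
  sign_eq : ∀ {s t}, st s = st t → sign (u s) = sign (u t)
  succ_eq : ∀ {s t}, st s = st t → sign (u (s + 1)) = sign (u (t + 1)) → st (s + 1) = st (t + 1)

/-- A loop of times `θ j`, of period `l`, which follows the transitions of the coding `st` and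
always picks a time at which `u` is nearest to `0` among all times with the same state. -/
structure IsNearestLoop (u : ℕ → ℝ) (st : ℕ → α) (θ : ℕ → ℕ) (l : ℕ) : Prop where
  periodic : Periodic θ l
  state_succ : ∀ j, st (θ j + 1) = st (θ (j + 1))
  nearest : ∀ j τ, st τ = st (θ j) → |u (θ j)| ≤ |u τ|

/-- The times in the same state as `θ j` whose successors leave the loop. -/
def exits (st : ℕ → α) (θ : ℕ → ℕ) (j : ℕ) : Set ℕ :=
  {τ | st τ = st (θ j) ∧ st (τ + 1) ≠ st (θ (j + 1))}

/-- The least distance of `u` to `0` over the exits at index `j`, meaningless if there are none. -/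
noncomputable def exitDist (u : ℕ → ℝ) (st : ℕ → α) (θ : ℕ → ℕ) (j : ℕ) : ℝ :=
  sInf ((fun τ => |u τ|) '' exits st θ j)

variable {F : ℝ → ℝ} {u : ℕ → ℝ} {st : ℕ → α} {θ : ℕ → ℕ} {i j k l m τ N : ℕ}

lemma finite_abs_image (hu : IsPseudoCycle F u N) (s : Set ℕ) : ((fun τ => |u τ|) '' s).Finite := by
  rw [← image_image (fun x : ℝ => |x|)]
  exact (((finite_range_of_periodic hu.periodic hu.pos).subset (image_subset_range u s)).image _)

lemma exitDist_le (hu : IsPseudoCycle F u N) (hτ : τ ∈ exits st θ j) : exitDist u st θ j ≤ |u τ| :=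
  csInf_le (finite_abs_image hu _).bddBelow ⟨τ, hτ, rfl⟩

lemma exists_abs_eq_exitDist (hu : IsPseudoCycle F u N) (hj : (exits st θ j).Nonempty) :
    ∃ τ ∈ exits st θ j, |u τ| = exitDist u st θ j :=
  (hj.image _).csInf_mem (finite_abs_image hu _)

lemma exitDist_eq_of_modEq (hθ : Periodic θ l) (hij : i ≡ j [MOD l]) :
    exitDist u st θ i = exitDist u st θ j := by
  rw [exitDist, exitDist, exits, exits, eq_of_modEq_of_periodic hθ hij,
    eq_of_modEq_of_periodic hθ (hij.add_right 1)]

lemma IsSignCoding.patternStep_exitDist (hst : IsSignCoding u st) (hu : IsPseudoCycle F u N)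
    (hθ : IsNearestLoop u st θ l) (hj : (exits st θ j).Nonempty) :
    patternStep F (fun j => sign (u (θ j))) j (exitDist u st θ j) = 0 := by
  obtain ⟨τ, hτ, hdist⟩ := exists_abs_eq_exitDist hu hj
  rw [← hdist]
  refine (hu.step τ).patternStep_eq_zero (hu.sign_ne_zero _) (hst.sign_eq hτ.1) fun hsign => ?_
  rw [← hst.sign_eq (hθ.state_succ j)] at hsign
  exact hτ.2 ((hst.succ_eq hτ.1 hsign).trans (hθ.state_succ j))

lemma IsSignCoding.periodic_sign_of_follows (hst : IsSignCoding u st) (hu : Periodic u N)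
    (hN : 0 < N) (hθ : Periodic θ l) (h : ∀ i, st (θ j + i) = st (θ (j + i))) :
    Periodic (fun t => sign (u t)) l := by
  have htail : ∀ i, sign (u (θ j + i + l)) = sign (u (θ j + i)) := fun i => by
    rw [hst.sign_eq (h i), Nat.add_assoc, hst.sign_eq (h (i + l)), ← Nat.add_assoc, hθ]
  have hshift : ∀ t, u (t + N * θ j) = u t := fun t =>
    eq_of_modEq_of_periodic hu (Nat.add_modEq_left_iff.2 (Nat.dvd_mul_right N _))
  intro t
  obtain ⟨i, hi⟩ := Nat.exists_eq_add_of_le (Nat.le_mul_of_pos_left (θ j) hN)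
  have := htail (t + i)
  rwa [show θ j + (t + i) = t + N * θ j by omega, Nat.add_right_comm, hshift, hshift] at this

/-- The actual continuation of `θ j` cannot follow the loop forever. -/
lemma IsSignCoding.exists_exit_after (hst : IsSignCoding u st) (hu : IsPseudoCycle F u N)
    (hθ : IsNearestLoop u st θ l) (hper : ¬ Periodic (fun t => sign (u t)) l) (j : ℕ) :
    ∃ d, 0 < d ∧ (∀ i ≤ d, st (θ j + i) = st (θ (j + i))) ∧ θ j + d ∈ exits st θ (j + d) := by
  classical
  have hleave : ∃ i, st (θ j + i) ≠ st (θ (j + i)) := by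
    by_contra! h
    exact hper (hst.periodic_sign_of_follows hu.periodic hu.pos hθ.periodic h)
  have hfollow : ∀ i < Nat.find hleave, st (θ j + i) = st (θ (j + i)) := fun i hi =>
    not_not.1 (Nat.find_min hleave hi)
  have hlt : 1 < Nat.find hleave := (Nat.lt_find_iff hleave 1).2 fun i hi => by
    interval_cases i
    · exact not_not.2 rfl
    · exact not_not.2 (hθ.state_succ j)
  obtain ⟨d, hd⟩ : ∃ d, Nat.find hleave = d + 1 := ⟨_, (Nat.sub_add_cancel hlt.le).symm⟩
  refine ⟨d, by omega, fun i hi => hfollow i (by omega), hfollow d (by omega), ?_⟩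
  have hspec := Nat.find_spec hleave
  rwa [hd] at hspec

lemma exists_rel_modEq {r : ℕ → ℕ → Prop} [IsTrans ℕ r] (hlt : ∀ {i j}, r i j → i < j)
    {L : Set ℕ} (hL : L.Nonempty) (hr : ∀ i ∈ L, ∃ j ∈ L, r i j) (hl : 0 < l) :
    ∃ i ∈ L, ∃ j, r i j ∧ i ≡ j [MOD l] := by
  obtain ⟨i₀, hi₀⟩ := hL
  choose! next hnext using hr
  let a : ℕ → ℕ := fun n => next^[n] i₀
  have haL : ∀ n, a n ∈ L := fun n => MapsTo.iterate (s := L) (fun i hi => (hnext i hi).1) n hi₀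
  have hstep : ∀ n, r (a n) (a (n + 1)) := fun n => by
    simp only [a, iterate_succ_apply']
    exact (hnext _ (haL n)).2
  have hmono : StrictMono a := strictMono_nat_of_lt_succ fun n => hlt (hstep n)
  obtain ⟨_, ⟨x, rfl⟩, _, ⟨y, rfl⟩, hxy, hmod⟩ :=
    Nat.exists_lt_modEq_of_infinite (infinite_range_of_injective hmono.injective) hl
  exact ⟨a x, haL x, a y, Nat.rel_of_forall_rel_succ_of_lt r hstep (hmono.lt_iff_lt.1 hxy), hmod⟩

/-- From the nearest exit at `i`, the pseudo-orbit of the loop covers its own next exit, hence the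
nearest exit there. -/
lemma IsSignCoding.exists_covers_exitDist (hF : Continuous F) (hF0 : F 0 = 0)
    (hst : IsSignCoding u st) (hu : IsPseudoCycle F u N) (hθ : IsNearestLoop u st θ l)
    (hper : ¬ Periodic (fun t => sign (u t)) l) (hi : (exits st θ i).Nonempty) :
    ∃ d, 0 < d ∧ (exits st θ (i + d)).Nonempty ∧
      Covers F (fun j => sign (u (θ j))) i d (exitDist u st θ i) (exitDist u st θ (i + d)) := by
  obtain ⟨τ, hτ, hdist⟩ := exists_abs_eq_exitDist hu hi
  obtain ⟨d, hd, hfollow, hexit⟩ := hst.exists_exit_after hu hθ hper i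
  obtain ⟨t, ht, hcov⟩ := covers_of_sign_eq (σ := fun j => sign (u (θ j))) hF hF0 hu.step
    (hdist ▸ hθ.nearest i τ hτ.1) fun i' hi' => hst.sign_eq (hfollow i' hi')
  exact ⟨d, hd, ⟨_, hexit⟩, t, ht, (exitDist_le hu hexit).trans hcov⟩

theorem IsSignCoding.hasCycleAboutZero (hF : Continuous F) (hF0 : F 0 = 0)
    (hst : IsSignCoding u st) (hu : IsPseudoCycle F u N) (hθ : IsNearestLoop u st θ l)
    (hper : ¬ Periodic (fun t => sign (u t)) l)
    (hchanges : changes (fun j => sign (u (θ j))) l = 2 * k) (hkl : k.Coprime l) (hl : 0 < l)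
    (hm : 0 < m) : HasCycleAboutZero F (m * k) (m * l) := by
  let σ : ℕ → SignType := fun j => sign (u (θ j))
  let e := exitDist u st θ
  have hσ : Periodic σ l := hθ.periodic.comp fun t => sign (u t)
  let r : ℕ → ℕ → Prop := fun i j => i < j ∧ Covers F σ i (j - i) (e i) (e j)
  have : IsTrans ℕ r := ⟨fun i j n ⟨hij, hcov⟩ ⟨hjn, hcov'⟩ => ⟨hij.trans hjn, by
    rw [show n - i = (j - i) + (n - j) by omega]
    exact hcov.trans hF hF0 ((Nat.add_sub_cancel' hij.le).symm ▸ hcov')⟩⟩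
  obtain ⟨d, -, -, hexit⟩ := hst.exists_exit_after hu hθ hper 0
  obtain ⟨i, hi, j, ⟨hij, hcov⟩, hmod⟩ := exists_rel_modEq (r := r) (fun h => h.1)
    (L := {j | (exits st θ j).Nonempty}) ⟨0 + d, _, hexit⟩ (fun i hi => by
      obtain ⟨d, hd, hne, hcov⟩ := hst.exists_covers_exitDist hF hF0 hu hθ hper hi
      exact ⟨i + d, hne, Nat.lt_add_of_pos_right hd, by rwa [Nat.add_sub_cancel_left]⟩) hl
  have hei : 0 < e i := by
    obtain ⟨τ, -, hdist⟩ := exists_abs_eq_exitDist hu hi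
    exact (abs_pos.2 (hu.ne_zero τ)).trans_eq hdist
  obtain ⟨c, hc⟩ := (Nat.modEq_iff_dvd' hij.le).1 hmod
  have hej : e j = e i := (exitDist_eq_of_modEq hθ.periodic hmod).symm
  rw [hej, hc] at hcov
  obtain ⟨t, ht, hmin⟩ := exists_minimalPeriod_patternMap_eq hF hF0 hσ
    hei (hst.patternStep_exitDist hu hθ hi) hl hcov
    (Nat.pos_of_ne_zero fun h => by simp [h] at hc; omega) hm
  exact hasCycleAboutZero_of_minimalPeriod_patternMap hF0 (fun j => hu.sign_ne_zero (θ j)) hσ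
    hchanges hkl hl hm ht hmin

end NearestLoops

section Discrepancy

/-- The number of changes of `σ` before time `τ`, compared with `2 * k` changes per `l` steps. -/
def discrepancy (k l : ℕ) (σ : ℕ → SignType) (τ : ℕ) : ℤ := l * changes σ τ - 2 * k * τ

variable {σ : ℕ → SignType} {k l n : ℕ}

lemma discrepancy_add (k l : ℕ) (σ : ℕ → SignType) (i j : ℕ) :
    discrepancy k l σ (i + j) = discrepancy k l σ i + discrepancy k l (fun t => σ (i + t)) j := by
  simp only [discrepancy, changes_add]
  push_cast
  ring

lemma discrepancy_one_eq_of_eq {σ' : ℕ → SignType} (h0 : σ 0 = σ' 0) (h1 : σ 1 = σ' 1) :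
    discrepancy k l σ 1 = discrepancy k l σ' 1 := by
  rw [discrepancy, discrepancy, changes_congr fun i hi => ?_]
  interval_cases i <;> assumption

lemma periodic_discrepancy (hσ : Periodic σ (n * l)) (h : changes σ (n * l) = 2 * k * n) :
    Periodic (discrepancy k l σ) (n * l) := fun τ => by
  simp only [discrepancy, changes_add, changes_shift hσ, h]
  push_cast
  ring

lemma exists_eq_zero_of_finite_range {E c : ℕ → ℤ} (hE : (range E).Finite) (hl : 0 < l)
    (hc : ∀ i, |c (i + 1) - c i| ≤ 1) (hEc : ∀ i, E (i + l) = E i + l * c i) : ∃ i, c i = 0 := by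
  by_contra! hne
  wlog h0 : 0 < c 0 generalizing E c
  · refine this (E := -E) (c := -c) ?_ (fun i => ?_) (fun i => ?_)
      (fun i => neg_ne_zero.2 (hne i)) ?_
    · refine (hE.image Neg.neg).subset ?_
      rintro _ ⟨i, rfl⟩
      exact ⟨E i, mem_range_self i, rfl⟩
    · rw [Pi.neg_apply, Pi.neg_apply, ← abs_neg]
      convert hc i using 2
      ring
    · simp only [Pi.neg_apply, hEc]
      ring
    · have := hne 0
      simp only [Pi.neg_apply]
      omega
  have hpos : ∀ i, 0 < c i := fun i => by
    induction i with
    | zero => exact h0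
    | succ i ih =>
      have := hne (i + 1)
      have := abs_le.1 (hc i)
      omega
  have hmono : StrictMono fun a => E (a * l) := strictMono_nat_of_lt_succ fun a => by
    rw [Nat.succ_mul, hEc]
    exact lt_add_of_pos_right _ (mul_pos (by exact_mod_cast hl) (hpos _))
  exact infinite_range_of_injective hmono.injective (hE.subset (range_comp_subset_range _ E))

/-- If no window of length `l` had exactly `2 * k` changes, they would all have more or all have
fewer, because the count moves by at most one from a window to the next, and the discrepancy would
be unbounded. -/
lemma exists_changes_window_eq (hl : 0 < l) (hfin : (range (discrepancy k l σ)).Finite) :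
    ∃ i, changes (fun t => σ (i + t)) l = 2 * k := by
  have hwindow : ∀ i, (changes (fun t => σ (i + t)) l : ℤ) = changes σ (i + l) - changes σ i :=
    fun i => by rw [changes_add]; push_cast; ring
  obtain ⟨i, hi⟩ := exists_eq_zero_of_finite_range
    (c := fun i => (changes σ (i + l) : ℤ) - changes σ i - 2 * k) hfin hl
    (fun i => by
      rw [Nat.add_right_comm, changes_succ, changes_succ]
      split_ifs <;> simp)
    fun i => by
      simp only [discrepancy]
      push_cast
      ring
  exact ⟨i, by have := hwindow i; omega⟩

end Discrepancy

section NearestWalks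

variable {α : Type*} {F : ℝ → ℝ} {u : ℕ → ℝ} {θ : ℕ → ℕ} {k l m n N : ℕ}

lemma exists_nearest (hu : IsPseudoCycle F u N) {s : Set ℕ} (hs : s.Nonempty) :
    ∃ τ ∈ s, ∀ τ' ∈ s, |u τ| ≤ |u τ'| := by
  obtain ⟨τ, hτ, h⟩ := (hs.image _).csInf_mem (finite_abs_image hu s)
  exact ⟨τ, hτ, fun τ' hτ' => h.trans_le (csInf_le (finite_abs_image hu s).bddBelow ⟨τ', hτ', rfl⟩)⟩

lemma exists_nearest_walk (hu : IsPseudoCycle F u N) (st : ℕ → α) :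
    ∃ θ : ℕ → ℕ, (∀ j, st (θ j + 1) = st (θ (j + 1))) ∧
      (∀ j τ, st τ = st (θ j) → |u (θ j)| ≤ |u τ|) ∧ ∀ i j, st (θ i) = st (θ j) → θ i = θ j := by
  let nearest : ℕ → Set ℕ := fun τ => {τ' | st τ' = st τ ∧ ∀ τ'', st τ'' = st τ → |u τ'| ≤ |u τ''|}
  let ν : ℕ → ℕ := fun τ => sInf (nearest τ)
  have hν : ∀ τ, ν τ ∈ nearest τ := fun τ =>
    Nat.sInf_mem (exists_nearest hu (s := {τ' | st τ' = st τ}) ⟨τ, rfl⟩)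
  have hν_congr : ∀ {τ τ'}, st τ = st τ' → ν τ = ν τ' := fun h => by simp only [ν, nearest, h]
  let next : ℕ → ℕ := fun τ => ν (τ + 1)
  let θ : ℕ → ℕ := fun i => next^[i] (ν 0)
  have hsucc : ∀ i, θ (i + 1) = ν (θ i + 1) := fun i => iterate_succ_apply' next i _
  have hθ : ∀ i, ν (θ i) = θ i := fun i => by
    cases i with
    | zero => exact hν_congr (hν 0).1
    | succ i => rw [hsucc]; exact hν_congr (hν _).1
  refine ⟨θ, fun j => ?_, fun j τ hτ => ?_, fun i j h => ?_⟩
  · rw [hsucc, (hν _).1]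
  · rw [← hθ j]
    exact (hν (θ j)).2 τ hτ
  · rw [← hθ i, ← hθ j, hν_congr h]

lemma discrepancy_walk {σ : ℕ → SignType}
    (hθ : ∀ j, discrepancy k l σ (θ j + 1) = discrepancy k l σ (θ (j + 1)))
    (hsign : ∀ j, σ (θ j + 1) = σ (θ (j + 1))) (j : ℕ) :
    discrepancy k l σ (θ j) = discrepancy k l σ (θ 0) + discrepancy k l (fun i => σ (θ i)) j := by
  induction j with
  | zero => simp [discrepancy]
  | succ j ih =>
    rw [← hθ, discrepancy_add, ih, discrepancy_add, add_assoc]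
    congr 2
    exact discrepancy_one_eq_of_eq rfl (hsign j)

lemma isSignCoding_discrepancy (k l : ℕ) (u : ℕ → ℝ) :
    IsSignCoding u fun τ => (discrepancy k l (fun t => sign (u t)) τ, sign (u τ)) where
  sign_eq h := congrArg Prod.snd h
  succ_eq {s t} h hsign := Prod.ext (by
    have hD := congrArg Prod.fst h
    simp only [discrepancy_add] at hD ⊢
    rw [hD, discrepancy_one_eq_of_eq (σ := fun i => sign (u (s + i)))
      (σ' := fun i => sign (u (t + i))) (congrArg Prod.snd h) hsign]) hsign

lemma periodic_walk {st : ℕ → α} {i : ℕ} (hsucc : ∀ j, st (θ j + 1) = st (θ (j + 1)))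
    (hinj : ∀ i j, st (θ i) = st (θ j) → θ i = θ j) (hclose : st (θ (i + l)) = st (θ i)) :
    Periodic (fun j => θ (i + j)) l := fun j => by
  induction j with
  | zero => exact hinj _ _ (by simpa using hclose)
  | succ j ih =>
    have ih : θ (i + (j + l)) = θ (i + j) := ih
    refine hinj _ _ ?_
    rw [Nat.add_right_comm j, ← Nat.add_assoc i (j + l), ← Nat.add_assoc i j 1, ← hsucc, ← hsucc,
      ih]

/-- A pseudo-cycle whose sign changes occur at the rate `2 * k / l` yields cycles of over-rotation
number `k / l`: code a time by its discrepancy and its sign, and walk along the nearest times. The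
walk has bounded discrepancy, so that some window of length `l` closes up. -/
theorem IsPseudoCycle.hasCycleAboutZero (hF : Continuous F) (hF0 : F 0 = 0)
    (hu : IsPseudoCycle F u (n * l)) (hchanges : changes (fun t => sign (u t)) (n * l) = 2 * k * n)
    (hkl : k.Coprime l) (hper : ¬ Periodic (fun t => sign (u t)) l) (hm : 0 < m) :
    HasCycleAboutZero F (m * k) (m * l) := by
  have hl : 0 < l := Nat.pos_of_mul_pos_left hu.pos
  let D := discrepancy k l fun t => sign (u t)
  let st : ℕ → ℤ × SignType := fun τ => (D τ, sign (u τ))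
  obtain ⟨θ, hsucc, hnear, hinj⟩ := exists_nearest_walk hu st
  have hDθ : ∀ j, D (θ j) = D (θ 0) + discrepancy k l (fun i => sign (u (θ i))) j :=
    discrepancy_walk (fun j => congrArg Prod.fst (hsucc j)) fun j => congrArg Prod.snd (hsucc j)
  have hDfin : (range D).Finite :=
    finite_range_of_periodic (periodic_discrepancy hu.periodic_sign hchanges) hu.pos
  obtain ⟨i, hi⟩ := exists_changes_window_eq (k := k) (σ := fun i => sign (u (θ i))) hl
    ((hDfin.image fun d => d - D (θ 0)).subset (by
      rintro _ ⟨j, rfl⟩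
      exact ⟨D (θ j), mem_range_self _, by rw [hDθ j]; ring⟩))
  have hclose : st (θ (i + l)) = st (θ i) := Prod.ext
    (show D (θ (i + l)) = D (θ i) by
      rw [hDθ, hDθ i, discrepancy_add]
      simp only [discrepancy, hi]
      push_cast
      ring)
    ((even_changes_iff (σ := fun t => sign (u (θ (i + t)))) (fun t => hu.sign_ne_zero _) l).1
      (hi ▸ even_two_mul k))
  exact (isSignCoding_discrepancy k l u).hasCycleAboutZero hF hF0 hu
    ⟨periodic_walk hsucc hinj hclose, fun j => hsucc (i + j), fun j => hnear (i + j)⟩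
    hper hi hkl hl hm

end NearestWalks

section ClosedWalks

variable {α : Type*} {F : ℝ → ℝ} {u v w : ℕ → ℝ} {st : ℕ → α} {θ : ℕ → ℕ} {c l A B N : ℕ}

lemma exists_isPseudoCycle (hN : 0 < N) (hstep : ∀ t < N, IsPseudoStep F (w t) (w (t + 1)))
    (hw : w N = w 0) : ∃ v, IsPseudoCycle F v N ∧ ∀ t ≤ N, v t = w t := by
  have heq : ∀ t ≤ N, w (t % N) = w t := fun t ht => by
    rcases ht.lt_or_eq with ht | rfl
    · rw [Nat.mod_eq_of_lt ht]
    · rw [Nat.mod_self, hw]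
  refine ⟨fun t => w (t % N), ⟨hN, fun t => ?_, fun t => ?_⟩, heq⟩
  · have hlt := Nat.mod_lt t hN
    simp only [← Nat.mod_add_mod t N 1, heq _ hlt]
    exact hstep _ hlt
  · simp only [Nat.add_mod_right]

lemma IsPseudoCycle.mul (hu : IsPseudoCycle F u N) (hc : 0 < c) : IsPseudoCycle F u (c * N) :=
  ⟨Nat.mul_pos hc hu.pos, hu.step, hu.periodic.nat_mul c⟩

lemma IsPseudoCycle.shift (hu : IsPseudoCycle F u N) (i : ℕ) :
    IsPseudoCycle F (fun t => u (i + t)) N :=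
  ⟨hu.pos, fun t => hu.step (i + t), hu.periodic.const_add i⟩

lemma IsPseudoCycle.exists_append (hu : IsPseudoCycle F u A) (hv : IsPseudoCycle F v B)
    (h0 : v 0 = u 0) : ∃ w, IsPseudoCycle F w (A + B) ∧ (∀ t ≤ B, w (A + t) = v t) ∧
      changes (fun t => sign (w t)) (A + B) =
        changes (fun t => sign (u t)) A + changes (fun t => sign (v t)) B := by
  let w' : ℕ → ℝ := fun t => if t < A then u t else v (t - A)
  have hw'A : ∀ t, w' (A + t) = v t := fun t => by
    simp only [w', Nat.not_lt.2 (Nat.le_add_right A t), if_false, Nat.add_sub_cancel_left]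
  have hw' : ∀ t ≤ A, w' t = u t := fun t ht => by
    rcases ht.lt_or_eq with ht | rfl
    · exact if_pos ht
    · exact (hw'A 0).trans (h0.trans hu.periodic.eq.symm)
  obtain ⟨w, hw, hww'⟩ := exists_isPseudoCycle (w := w') (Nat.add_pos_left hu.pos B)
    (fun t _ => by
      rcases Nat.lt_or_ge t A with h | h
      · rw [hw' t h.le, hw' (t + 1) h]
        exact hu.step t
      · obtain ⟨t, rfl⟩ := Nat.exists_eq_add_of_le h
        rw [Nat.add_assoc, hw'A, hw'A]
        exact hv.step t)
    (by rw [hw'A, hw' 0 (Nat.zero_le A), hv.periodic.eq, h0])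
  have hwA : ∀ t ≤ B, w (A + t) = v t := fun t ht => by
    rw [hww' _ (Nat.add_le_add_left ht A), hw'A]
  refine ⟨w, hw, hwA, ?_⟩
  rw [changes_add]
  congr 1
  · exact changes_congr fun t ht => by rw [hww' t (by omega), hw' t ht]
  · exact changes_congr fun t ht => by rw [hwA t ht]

lemma IsNearestLoop.isPseudoCycle (hst : IsSignCoding u st)
    (hu : ∀ t, IsPseudoStep F (u t) (u (t + 1))) (hθ : IsNearestLoop u st θ l) (hl : 0 < l) :
    IsPseudoCycle F (fun j => u (θ j)) l :=
  ⟨hl, fun j => (hu (θ j)).mono (hst.sign_eq (hθ.state_succ j)).symm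
    (hθ.nearest (j + 1) _ (hθ.state_succ j)), hθ.periodic.comp u⟩

end ClosedWalks

section Centered

/-- A continuous map of the line that moves no point away from `0`, so that its orbits change
sign exactly when they change their direction of motion. -/
structure IsCentered (F : ℝ → ℝ) : Prop where
  continuous : Continuous F
  self_le_of_nonpos : ∀ t ≤ 0, t ≤ F t
  le_self_of_nonneg : ∀ t, 0 ≤ t → F t ≤ t

variable {F : ℝ → ℝ} {u : ℕ → ℝ} {s : SignType} {a b : ℝ} {k l m p q N : ℕ}

lemma IsCentered.map_zero (hF : IsCentered F) : F 0 = 0 :=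
  (hF.le_self_of_nonneg 0 le_rfl).antisymm (hF.self_le_of_nonpos 0 le_rfl)

lemma IsCentered.abs_le_of_sign_eq (hF : IsCentered F) (h : IsPseudoStep F a b)
    (hsign : sign b = sign a) : |b| ≤ |a| := by
  refine h.2.trans ?_
  rw [hsign, ← sign_mul_self]
  rcases lt_trichotomy a 0 with ha | rfl | ha
  · simpa [sign_neg ha] using hF.self_le_of_nonpos a ha.le
  · simp
  · simpa [sign_pos ha] using hF.le_self_of_nonneg a ha.le

/-- The nearest point of sign `s` can only be followed by another nearest point of sign `s` or by
a change of sign. -/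
lemma IsCentered.exists_nearest_crossing (hF : IsCentered F) (hu : IsPseudoCycle F u N)
    (hs : ∃ t, sign (u t) = s) (hs' : ∃ t, sign (u t) ≠ s) :
    ∃ τ, sign (u τ) = s ∧ (∀ τ', sign (u τ') = s → |u τ| ≤ |u τ'|) ∧ sign (u (τ + 1)) ≠ s := by
  by_contra! hstay
  obtain ⟨τ, hτ, hnear⟩ := exists_nearest hu (s := {t | sign (u t) = s}) hs
  have hall : ∀ i, sign (u (τ + i)) = s ∧
      ∀ τ', sign (u τ') = s → |u (τ + i)| ≤ |u τ'| := fun i => by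
    induction i with
    | zero => exact ⟨hτ, hnear⟩
    | succ i ih =>
      have hsucc := hstay _ ih.1 ih.2
      exact ⟨hsucc, fun τ' hτ' =>
        (hF.abs_le_of_sign_eq (hu.step _) (hsucc.trans ih.1.symm)).trans (ih.2 τ' hτ')⟩
  obtain ⟨t, ht⟩ := hs'
  obtain ⟨i, hi⟩ := Nat.exists_eq_add_of_le (Nat.le_add_left τ t |>.trans
    (Nat.add_le_add_left (Nat.le_mul_of_pos_right τ hu.pos) t))
  exact ht (by rw [← show u (t + τ * N) = u t from hu.periodic.nat_mul τ t, hi]; exact (hall i).1)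

lemma IsCentered.exists_alternating_loop (hF : IsCentered F) (hu : IsPseudoCycle F u N)
    (hchanges : changes (fun t => sign (u t)) N ≠ 0) :
    ∃ θ, IsNearestLoop u (fun t => sign (u t)) θ 2 ∧
      ∀ j, sign (u (θ (j + 1))) ≠ sign (u (θ j)) := by
  have eq_neg : ∀ s s' : SignType, s ≠ 0 → s' ≠ 0 → s' ≠ s → s' = -s := by decide
  obtain ⟨t, ht⟩ : ∃ t, sign (u (t + 1)) ≠ sign (u t) := by
    by_contra! h
    exact hchanges (Nat.count_iff_forall_not.2 fun {i} _ => not_not.2 (h i))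
  obtain ⟨a, ha, hna, ha'⟩ := hF.exists_nearest_crossing hu ⟨t, rfl⟩ ⟨t + 1, ht⟩
  obtain ⟨b, hb, hnb, hb'⟩ := hF.exists_nearest_crossing hu ⟨t + 1, rfl⟩ ⟨t, ht.symm⟩
  have ht' := eq_neg _ _ (hu.sign_ne_zero _) (hu.sign_ne_zero _) ht
  have ha' := eq_neg _ _ (hu.sign_ne_zero _) (hu.sign_ne_zero _) ha'
  have hb' := eq_neg _ _ (hu.sign_ne_zero _) (hu.sign_ne_zero _) hb'
  let θ : ℕ → ℕ := fun j => if Even j then a else b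
  have hθ : ∀ j, θ j = a ∧ θ (j + 1) = b ∨ θ j = b ∧ θ (j + 1) = a := fun j => by
    by_cases hj : Even j <;> simp [θ, hj, Nat.even_add_one]
  refine ⟨θ, ⟨fun j => by simp only [θ, Nat.even_add, even_two, iff_true], fun j => ?_,
    fun j τ => ?_⟩, fun j => ?_⟩
  · obtain ⟨h, h'⟩ | ⟨h, h'⟩ := hθ j <;> simp only [h, h']
    · rw [ha', hb, ht']
    · rw [hb', ha, ht', neg_neg]
  · obtain ⟨h, -⟩ | ⟨h, -⟩ := hθ j <;> simp only [h]
    · exact ha ▸ hna τ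
    · exact hb ▸ hnb τ
  · obtain ⟨h, h'⟩ | ⟨h, h'⟩ := hθ j <;> rw [h, h', ha, hb]
    exacts [ht, ht.symm]

lemma isSignCoding_sign (u : ℕ → ℝ) : IsSignCoding u fun t => sign (u t) := ⟨id, fun _ h => h⟩

lemma IsCentered.hasCycleAboutZero_one_two (hF : IsCentered F) (hu : IsPseudoCycle F u q)
    (hchanges : changes (fun t => sign (u t)) q = 2 * p) (hp : 0 < p) (hpq : 2 * p < q)
    (hm : 0 < m) : HasCycleAboutZero F (m * 1) (m * 2) := by
  obtain ⟨θ, hθ, halt⟩ := hF.exists_alternating_loop hu (by omega)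
  refine (isSignCoding_sign u).hasCycleAboutZero hF.continuous hF.map_zero hu hθ (fun hper => ?_)
    (changes_eq_self_of_forall_ne fun j _ => halt j) (Nat.coprime_one_left 2) two_pos hm
  obtain ⟨c, hc⟩ := (even_changes_iff (fun t => hu.sign_ne_zero t) 2).2 hper.eq
  have hle := changes_le (fun t => sign (u t)) 2
  have h := changes_mul hper q
  rw [Nat.mul_comm q 2, changes_mul hu.periodic_sign, hchanges, hc] at h
  obtain rfl | rfl : c = 0 ∨ c = 1 := by omega
  all_goals omega

/-- Dilute the pseudo-cycle by the right amount of alternation near `0`, so that signs change at the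
rate `2 * k / l`. -/
lemma IsCentered.hasCycleAboutZero_of_two_mul_lt (hF : IsCentered F) (hu : IsPseudoCycle F u q)
    (hchanges : changes (fun t => sign (u t)) q = 2 * p) (hp : 0 < p) (hkl : k.Coprime l)
    (h2k : 2 * k < l) (hlt : p * l < k * q) (hm : 0 < m) : HasCycleAboutZero F (m * k) (m * l) := by
  have hl : 0 < l := by omega
  obtain ⟨θ, hθ, halt⟩ := hF.exists_alternating_loop hu (by omega)
  obtain ⟨d, rfl⟩ := Nat.exists_eq_add_of_le (hchanges ▸ changes_le (fun t => sign (u t)) q)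
  obtain ⟨e, rfl⟩ := Nat.exists_eq_add_of_le h2k.le
  obtain ⟨a, ha⟩ := Nat.exists_eq_add_of_le hlt.le
  have hkd : k * d = p * e + a := by linarith
  have he : 0 < e := by omega
  have ha0 : 0 < a := by omega
  set l := 2 * k + e
  have hZ : ∀ N, changes (fun j => sign (u (θ j))) N = N := fun N =>
    changes_eq_self_of_forall_ne fun j _ => halt j
  obtain ⟨w, hw, hwA, hwchanges⟩ := ((hu.shift (θ 0)).mul (Nat.mul_pos he hl)).exists_append
    ((hθ.isPseudoCycle (isSignCoding_sign u) hu.step two_pos).mul (Nat.mul_pos ha0 hl)) rfl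
  have hlen : e * l * (2 * p + d) + a * l * 2 = l * d * l := by
    have : e * (2 * p + d) + a * 2 = d * l := by simp only [l]; nlinarith
    linear_combination l * this
  have hwn : changes (fun t => sign (w t)) (l * d * l) = 2 * k * (l * d) := by
    rw [← hlen, hwchanges, changes_mul (hu.periodic_sign.const_add _),
      changes_shift hu.periodic_sign, hchanges, hZ]
    linear_combination 2 * l * hkd.symm
  rw [hlen] at hw
  refine hw.hasCycleAboutZero hF.continuous hF.map_zero hwn hkl (fun hper => ?_) hm
  have hle : l ≤ a * l * 2 := by nlinarith
  have hwl : changes (fun t => sign (w t)) l = l := by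
    rw [← changes_shift hper (e * l * (2 * p + d)),
      changes_congr fun t ht => by rw [hwA t (ht.trans hle)]]
    exact hZ l
  rw [changes_mul hper, hwl] at hwn
  nlinarith [hw.pos]

lemma IsCentered.hasCycleAboutZero (hF : IsCentered F) (hu : IsPseudoCycle F u q)
    (hchanges : changes (fun t => sign (u t)) q = 2 * p) (hp : 0 < p) (hkl : k.Coprime l)
    (h2k : 2 * k ≤ l) (hlt : p * l < k * q) (hm : 0 < m) :
    HasCycleAboutZero F (m * k) (m * l) := by
  rcases h2k.lt_or_eq with h2k | rfl
  · exact hF.hasCycleAboutZero_of_two_mul_lt hu hchanges hp hkl h2k hlt hm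
  · obtain rfl : k = 1 := hkl.eq_one_of_dvd (Nat.dvd_mul_left k 2)
    exact hF.hasCycleAboutZero_one_two hu hchanges hp (by omega) hm

/-- Waiting long enough at the fixed point `u 0` makes the rate of sign changes arbitrarily low. -/
lemma IsCentered.hasCycleAboutZero_of_fixedPoint (hF : IsCentered F) (hu : IsPseudoCycle F u N)
    (hfix : F (u 0) = u 0) (hchanges : changes (fun t => sign (u t)) N ≠ 0) (hk : 0 < k)
    (hkl : k.Coprime l) (h2k : 2 * k ≤ l) (hm : 0 < m) : HasCycleAboutZero F (m * k) (m * l) := by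
  obtain ⟨p, hp⟩ := even_iff_exists_two_mul.1
    ((even_changes_iff (fun t => hu.sign_ne_zero t) N).2 hu.periodic_sign.eq)
  have hstay := isPseudoStep_apply (hfix.trans_ne (hu.ne_zero 0))
  rw [hfix] at hstay
  have hconst : IsPseudoCycle F (fun _ => u 0) (p * l) :=
    ⟨Nat.mul_pos (by omega) (by omega), fun _ => hstay, fun _ => rfl⟩
  obtain ⟨w, hw, -, hwchanges⟩ := hu.exists_append hconst rfl
  refine hF.hasCycleAboutZero (p := p) hw ?_ (by omega) hkl h2k ?_ hm
  · rw [hwchanges, hp, Nat.add_eq_left]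
    exact changes_eq_zero_iff.2 fun _ _ => rfl
  · exact (Nat.lt_add_of_pos_left hu.pos).trans_le (Nat.le_mul_of_pos_left _ hk)

end Centered

section Centering

/-- The map `f` read in the coordinate `t = y - z` centred at a fixed point `z`, and truncated so
that it moves no point away from `0`. -/
noncomputable def center (f : ℝ → ℝ) (z t : ℝ) : ℝ :=
  if t ≤ 0 then max (f (t + z) - z) t else min (f (t + z) - z) t

/-- `f` moves `y` towards `z`, possibly beyond it. -/
def MovesToward (f : ℝ → ℝ) (z y : ℝ) : Prop := (f y - y) * (y - z) < 0

variable {f : ℝ → ℝ} {y z : ℝ}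

lemma MovesToward.ne (h : MovesToward f z y) : y ≠ z := by
  rintro rfl
  simp [MovesToward] at h

lemma movesToward_of_lt (hyz : y < z) (h : y < f y) : MovesToward f z y :=
  mul_neg_of_pos_of_neg (sub_pos.2 h) (sub_neg.2 hyz)

lemma movesToward_of_gt (hzy : z < y) (h : f y < y) : MovesToward f z y :=
  mul_neg_of_neg_of_pos (sub_neg.2 h) (sub_pos.2 hzy)

lemma MovesToward.lt_of_lt_apply (h : MovesToward f z y) (hy : y < f y) : y < z :=
  sub_neg.1 (neg_of_mul_neg_right h (sub_pos.2 hy).le)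

lemma MovesToward.sign_eq (h : MovesToward f z y) : sign (f y - y) = -sign (y - z) := by
  have hmul : sign (f y - y) * sign (y - z) = -1 := by rw [← sign_mul]; exact sign_neg h
  have : ∀ s s' : SignType, s * s' = -1 → s = -s' := by decide
  exact this _ _ hmul

lemma isCentered_center (hf : Continuous f) (hz : f z = z) : IsCentered (center f z) where
  continuous := by
    refine Continuous.if_le (by fun_prop) (by fun_prop) continuous_id continuous_const ?_
    rintro t rfl
    simp [hz]
  self_le_of_nonpos t ht := by rw [center, if_pos ht]; exact le_max_right _ _
  le_self_of_nonneg t ht := by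
    rcases ht.lt_or_eq with ht | rfl
    · rw [center, if_neg ht.not_ge]
      exact min_le_right _ _
    · simp [center, hz]

lemma center_sub (h : MovesToward f z y) : center f z (y - z) = f y - z := by
  rw [center, sub_add_cancel]
  rcases h.ne.lt_or_gt with hyz | hyz
  · have := pos_of_mul_neg_left h (sub_neg.2 hyz).le
    rw [if_pos (sub_neg.2 hyz).le, max_eq_left (by linarith)]
  · have := neg_of_mul_neg_left h (sub_pos.2 hyz).le
    rw [if_neg (sub_pos.2 hyz).not_ge, min_eq_left (by linarith)]

lemma movesToward_of_center_ne (hy : y ≠ z) (h : center f z (y - z) ≠ y - z) :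
    MovesToward f z y := by
  rw [center, sub_add_cancel] at h
  rcases hy.lt_or_gt with hyz | hyz
  · rw [if_pos (sub_neg.2 hyz).le] at h
    exact movesToward_of_lt hyz (not_le.1 fun hle => h (max_eq_right (by linarith)))
  · rw [if_neg (sub_pos.2 hyz).not_ge] at h
    exact movesToward_of_gt hyz (not_le.1 fun hle => h (min_eq_right (by linarith)))

end Centering

section Orbits

variable {f : ℝ → ℝ} {x z : ℝ} {p q : ℕ}

lemma apply_iterate_ne (hx : 1 < minimalPeriod f x) (i : ℕ) : f (f^[i] x) ≠ f^[i] x := by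
  intro hfix
  have hper := minimalPeriod_pos_iff_mem_periodicPts.1 (zero_lt_one.trans hx)
  exact hx.ne ((minimalPeriod_eq_one_iff_isFixedPt.2 hfix).symm.trans
    (minimalPeriod_apply_iterate hper i))

lemma periodic_iterate (f : ℝ → ℝ) (x : ℝ) :
    Periodic (fun i => f^[i] x) (minimalPeriod f x) := fun _ => iterate_add_minimalPeriod_eq

lemma overCount_eq_changes (hx : ∀ i, f (f^[i] x) ≠ f^[i] x) (q : ℕ) :
    overCount f x q = changes (fun i => sign (f (f^[i] x) - f^[i] x)) q := by
  have mul_neg_iff : ∀ s s' : SignType, s ≠ 0 → s' ≠ 0 → (s * s' = -1 ↔ s' ≠ s) := by decide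
  have hsign : ∀ i, sign (f (f^[i] x) - f^[i] x) ≠ 0 := fun i =>
    sign_ne_zero.2 (sub_ne_zero.2 (hx i))
  rw [overCount, changes, Nat.count_eq_card_filter_range]
  congr 1
  refine Finset.filter_congr fun i _ => ?_
  rw [← sign_eq_neg_one_iff, sign_mul, mul_neg_iff _ _ (hsign i) (hsign (i + 1))]

lemma sign_sub_iterate_ne_zero (hx : 1 < minimalPeriod f x) (i : ℕ) :
    sign (f (f^[i] x) - f^[i] x) ≠ 0 :=
  sign_ne_zero.2 (sub_ne_zero.2 (apply_iterate_ne hx i))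

lemma iterate_center (hx : ∀ i, MovesToward f z (f^[i] x)) (i : ℕ) :
    (center f z)^[i] (x - z) = f^[i] x - z := by
  induction i with
  | zero => rfl
  | succ i ih => rw [iterate_succ_apply', iterate_succ_apply', ih, center_sub (hx i)]

lemma minimalPeriod_center (hx : ∀ i, MovesToward f z (f^[i] x)) :
    minimalPeriod (center f z) (x - z) = minimalPeriod f x :=
  minimalPeriod_eq_of_injective (e := fun y => y - z) sub_left_injective (iterate_center hx)

lemma overCount_eq_changes_center (hx : ∀ i, MovesToward f z (f^[i] x)) (q : ℕ) :
    overCount f x q = changes (fun i => sign ((center f z)^[i] (x - z))) q := by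
  rw [overCount_eq_changes fun i h => by simpa [MovesToward, h] using hx i]
  simp only [iterate_center hx, (hx _).sign_eq]
  exact changes_comp neg_injective _ q

lemma HasCycleAboutZero.hasOverPair (hq : 1 < q) (h : HasCycleAboutZero (center f z) p q) :
    HasOverPair f univ p q := by
  obtain ⟨y, hy, hy0, hchanges⟩ := h
  have hmoves : ∀ w, w ≠ 0 → center f z w ≠ w → MovesToward f z (w + z) := fun w h0 hw =>
    movesToward_of_center_ne (by simpa using h0) (by simpa using hw)
  have hy_moves : ∀ i, MovesToward f z ((center f z)^[i] y + z) := fun i =>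
    hmoves _ (hy0 i) (apply_iterate_ne (hy ▸ hq) i)
  have horbit : ∀ i, f^[i] (y + z) = (center f z)^[i] y + z := fun i => by
    induction i with
    | zero => rfl
    | succ i ih =>
      have := center_sub (hy_moves i)
      rw [add_sub_cancel_right] at this
      rw [iterate_succ_apply', iterate_succ_apply', ih, this, sub_add_cancel]
  have hx : ∀ i, MovesToward f z (f^[i] (y + z)) := fun i => horbit i ▸ hy_moves i
  refine ⟨y + z, mem_univ _, ?_, ?_⟩
  · rw [← minimalPeriod_center hx, add_sub_cancel_right, hy]
  · rw [overCount_eq_changes_center hx, add_sub_cancel_right, hchanges]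

end Orbits

section SeparatingFixedPoint

variable {f h : ℝ → ℝ} {a b x y z ζ : ℝ}

lemma exists_last_zero (hh : Continuous h) (hab : a < b) (ha : 0 < h a) (hb : h b < 0) :
    ∃ z, a < z ∧ z < b ∧ h z = 0 ∧ ∀ t, z < t → t ≤ b → h t < 0 := by
  obtain ⟨t, ht, ht0⟩ := intermediate_value_Icc' hab.le hh.continuousOn ⟨hb.le, ha.le⟩
  obtain ⟨z, ⟨⟨haz, hzb⟩, hz⟩, hmax⟩ := (isCompact_Icc.inter_right
    (isClosed_eq hh continuous_const)).exists_isGreatest ⟨t, ht, ht0⟩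
  have hz : h z = 0 := hz
  refine ⟨z, haz.lt_of_ne ?_, hzb.lt_of_ne ?_, hz, fun t hzt htb => not_le.1 fun h0 => ?_⟩
  · rintro rfl
    linarith
  · rintro rfl
    linarith
  · obtain ⟨s, ⟨hts, hsb⟩, hs⟩ := intermediate_value_Icc' htb hh.continuousOn ⟨hb.le, h0⟩
    exact ((hzt.trans_le hts).trans_le (hmax ⟨⟨by linarith, hsb⟩, hs⟩)).false

lemma exists_first_zero (hh : Continuous h) (hab : a < b) (ha : h a < 0) (hb : 0 < h b) :
    ∃ z, a < z ∧ z < b ∧ h z = 0 ∧ ∀ t, a ≤ t → t < z → h t < 0 := by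
  obtain ⟨z, hbz, hza, hz, hlt⟩ := exists_last_zero (h := fun t => h (-t)) (by fun_prop)
    (neg_lt_neg hab) (by simpa using hb) (by simpa using ha)
  refine ⟨-z, by linarith, by linarith, hz, fun t hat htz => ?_⟩
  simpa using hlt (-t) (by linarith) (by linarith)

lemma exists_lowest_decreasing (hx : 1 < minimalPeriod f x) :
    ∃ a, f (f^[a] x) < f^[a] x ∧ ∀ i, f^[i] x < f^[a] x → f^[i] x < f (f^[i] x) := by
  have hfin := finite_range_of_periodic (periodic_iterate f x) (by omega)
  have hdec : ∃ i, f (f^[i] x) < f^[i] x := by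
    by_contra! hinc
    have hmono : StrictMono fun i => f^[i] x := strictMono_nat_of_lt_succ fun i => by
      rw [iterate_succ_apply']
      exact (hinc i).lt_of_ne (apply_iterate_ne hx i).symm
    exact infinite_range_of_injective hmono.injective hfin
  obtain ⟨_, ⟨⟨a, rfl⟩, ha⟩, hmin⟩ := exists_min_image {y ∈ range fun i => f^[i] x | f y < y} id
    (hfin.subset (sep_subset _ _)) (let ⟨i, hi⟩ := hdec; ⟨f^[i] x, ⟨i, rfl⟩, hi⟩)
  refine ⟨a, ha, fun i hi => (apply_iterate_ne hx i).lt_or_gt.resolve_left fun hdec => ?_⟩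
  exact hi.not_ge (hmin _ ⟨⟨i, rfl⟩, hdec⟩)

/-- Take for `z` the last fixed point before the lowest point of the orbit that moves down. -/
lemma exists_separating_fixedPoint (hf : Continuous f) (hx : 1 < minimalPeriod f x) :
    ∃ z a b, f z = z ∧ f^[b] x < z ∧ z < f^[a] x ∧
      ∀ i, f^[i] x ≤ f^[a] x → MovesToward f z (f^[i] x) := by
  obtain ⟨a, ha, hlow⟩ := exists_lowest_decreasing hx
  obtain ⟨_, ⟨b, rfl⟩, hmin⟩ := exists_min_image (range fun i => f^[i] x) id
    (finite_range_of_periodic (periodic_iterate f x) (by omega)) (range_nonempty _)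
  have hb : f^[b] x < f (f^[b] x) :=
    (hmin _ ⟨b + 1, iterate_succ_apply' f b x⟩).lt_of_ne (apply_iterate_ne hx b).symm
  have hba : f^[b] x < f^[a] x := (hmin _ ⟨a, rfl⟩).lt_of_ne fun h : f^[b] x = f^[a] x =>
    hb.not_gt (h ▸ ha)
  obtain ⟨z, hbz, hza, hz, hdec⟩ := exists_last_zero (h := fun t => f t - t) (by fun_prop) hba
    (sub_pos.2 hb) (sub_neg.2 ha)
  refine ⟨z, a, b, sub_eq_zero.1 hz, hbz, hza, fun i hi => ?_⟩
  have hne : f^[i] x ≠ z := fun h => apply_iterate_ne hx i (by rw [h, sub_eq_zero.1 hz])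
  rcases hne.lt_or_gt with h | h
  · exact movesToward_of_lt h (hlow i (h.trans hza))
  · exact movesToward_of_gt h (sub_neg.1 (hdec _ h hi))

lemma IsPseudoStep.min_left {F : ℝ → ℝ} {s : ℝ} (hs : 0 < s) (h : IsPseudoStep F a b) :
    IsPseudoStep F a (min s b) := by
  rcases le_total b s with hle | hle
  · rwa [min_eq_right hle]
  · rw [min_eq_left hle]
    refine h.mono ?_ ?_
    · rw [sign_pos hs, sign_pos (hs.trans_le hle)]
    · rwa [abs_of_pos hs, abs_of_pos (hs.trans_le hle)]

lemma isPseudoStep_center (h : MovesToward f z y) (hne : f y ≠ z) :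
    IsPseudoStep (center f z) (y - z) (f y - z) :=
  center_sub h ▸ isPseudoStep_apply (center_sub h ▸ sub_ne_zero.2 hne)

/-- Pull the escape beyond the fixed point `ζ` back to `ζ`, from where every point between `z` and
`ζ` can be reached; just before escaping, the orbit must be below `z`. -/
lemma exists_isPseudoCycle_of_escape {d : ℕ} (hζ : f ζ = ζ) (hzy : z < y) (hyζ : y < ζ)
    (hlt : ∀ i ≤ d, f^[i] y < ζ) (hmoves : ∀ i ≤ d, MovesToward f z (f^[i] y))
    (hesc : ζ ≤ f^[d + 1] y) :
    ∃ u N, IsPseudoCycle (center f z) u N ∧ center f z (u 0) = u 0 ∧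
      changes (fun t => sign (u t)) N ≠ 0 := by
  have hs : 0 < ζ - z := by linarith
  have hfix : center f z (ζ - z) = ζ - z := by simp [center, hζ, hs.not_ge]
  let w : ℕ → ℝ
    | 0 => ζ - z
    | t + 1 => min (ζ - z) (f^[t] y - z)
  have hw_escape : w (d + 2) = w 0 := min_eq_left (by linarith)
  have hne : ∀ t ≤ d + 1, f^[t] y ≠ z := fun t ht => by
    rcases ht.lt_or_eq with ht | rfl
    · exact (hmoves t (by omega)).ne
    · linarith
  have hstep : ∀ t < d + 2, IsPseudoStep (center f z) (w t) (w (t + 1)) := by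
    rintro (_ | t) ht
    · refine ((isPseudoStep_apply (hfix.symm ▸ hs.ne')).mono ?_ ?_).min_left hs
      · rw [hfix]
        exact (sign_pos (sub_pos.2 hzy)).trans (sign_pos hs).symm
      · rw [hfix, abs_of_pos hs]
        exact (abs_of_pos (sub_pos.2 hzy)).trans_le (by simpa using hyζ.le)
    · have hwt : w (t + 1) = f^[t] y - z :=
        min_eq_right (sub_le_sub_right (hlt t (by omega)).le z)
      have hstep := isPseudoStep_center (hmoves t (by omega)) <| by
        rw [← iterate_succ_apply' f]
        exact hne (t + 1) (by omega)
      rw [hwt, show w (t + 2) = min (ζ - z) (f (f^[t] y) - z) by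
        rw [← iterate_succ_apply' f]]
      exact hstep.min_left hs
  obtain ⟨u, hu, huw⟩ := exists_isPseudoCycle (by omega) hstep hw_escape
  refine ⟨u, d + 2, hu, ?_, fun h => ?_⟩
  · rw [huw 0 (by omega)]
    exact hfix
  · have hbelow : f^[d] y < z := (hmoves d le_rfl).lt_of_lt_apply <|
      (hlt d le_rfl).trans_le (by rwa [← iterate_succ_apply' f d y])
    have hsign := changes_eq_zero_iff.1 h (d + 1) (by omega)
    rw [huw 0 (by omega), huw (d + 1) (by omega), sign_pos hs,
      sign_neg ((min_le_right _ _).trans_lt (sub_neg.2 hbelow))] at hsign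
    exact absurd hsign (by decide)

end SeparatingFixedPoint

section Reduction

variable {f F : ℝ → ℝ} {x : ℝ} {p q : ℕ}

lemma isPseudoCycle_iterate (h0 : ∀ i, F^[i] x ≠ 0) (hx : 0 < minimalPeriod F x) :
    IsPseudoCycle F (fun i => F^[i] x) (minimalPeriod F x) where
  pos := hx
  step t := by
    simp only [iterate_succ_apply']
    exact isPseudoStep_apply (by rw [← iterate_succ_apply' F]; exact h0 _)
  periodic := periodic_iterate F x

lemma two_mul_le_of_hasOverPair {I : Set ℝ} (h : HasOverPair f I p q) : 2 * p ≤ q := by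
  obtain ⟨x, -, -, hcount⟩ := h
  exact hcount.ge.trans ((Finset.card_filter_le _ _).trans_eq (Finset.card_range q))

lemma exists_hasOverPair (hf : Continuous f) (hx : 1 < minimalPeriod f x) :
    ∃ p, 0 < p ∧ HasOverPair f univ p (minimalPeriod f x) := by
  let σ : ℕ → SignType := fun i => sign (f (f^[i] x) - f^[i] x)
  have hσ : Periodic σ (minimalPeriod f x) :=
    (periodic_iterate f x).comp fun y => sign (f y - y)
  have hcount : overCount f x (minimalPeriod f x) = changes σ (minimalPeriod f x) :=
    overCount_eq_changes (apply_iterate_ne hx) _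
  obtain ⟨p, hp⟩ : Even (changes σ (minimalPeriod f x)) :=
    (even_changes_iff (sign_sub_iterate_ne_zero hx) _).2 hσ.eq
  refine ⟨p, Nat.pos_of_ne_zero ?_, x, mem_univ x, rfl, by omega⟩
  rintro rfl
  obtain ⟨z, a, b, -, hbz, hza, hmoves⟩ := exists_separating_fixedPoint hf hx
  have hconst : ∀ i, σ i = σ 0 := fun i => by
    rw [← hσ.map_mod_nat]
    exact changes_eq_zero_iff.1 hp _ (Nat.mod_lt _ (by omega)).le
  have hab : σ a = σ b := (hconst a).trans (hconst b).symm
  simp only [σ, (hmoves a le_rfl).sign_eq, (hmoves b (hbz.trans hza).le).sign_eq,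
    sign_pos (sub_pos.2 hza), sign_neg (sub_neg.2 hbz)] at hab
  exact absurd hab (by decide)

lemma exists_isPseudoCycle_of_increasing {z : ℝ} {a c : ℕ} (hf : Continuous f)
    (hx : 1 < minimalPeriod f x) (hza : z < f^[a] x)
    (hmoves : ∀ i, f^[i] x ≤ f^[a] x → MovesToward f z (f^[i] x))
    (hac : f^[a] x < f^[c] x) (hc : f^[c] x < f (f^[c] x)) :
    ∃ u N, IsPseudoCycle (center f z) u N ∧ center f z (u 0) = u 0 ∧
      changes (fun t => sign (u t)) N ≠ 0 := by
  classical
  have ha : f (f^[a] x) < f^[a] x :=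
    sub_neg.1 (neg_of_mul_neg_left (hmoves a le_rfl) (sub_pos.2 hza).le)
  obtain ⟨ζ, haζ, hζc, hζ, hdec⟩ := exists_first_zero (h := fun t => f t - t) (by fun_prop) hac
    (sub_neg.2 ha) (sub_pos.2 hc)
  have hbelow : ∀ i, f^[i] x < ζ → MovesToward f z (f^[i] x) := fun i hi => by
    rcases le_total (f^[i] x) (f^[a] x) with h | h
    · exact hmoves i h
    · exact movesToward_of_gt (hza.trans_le h) (sub_neg.1 (hdec _ h hi))
  have hescape : ∃ i, ζ ≤ f^[i] (f^[a] x) := by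
    refine ⟨c + (minimalPeriod f x * a - a), ?_⟩
    have ha : a ≤ minimalPeriod f x * a := Nat.le_mul_of_pos_left a (by omega)
    rw [← iterate_add_apply, Nat.add_assoc, Nat.sub_add_cancel ha, Nat.mul_comm]
    exact hζc.le.trans_eq ((periodic_iterate f x).nat_mul a c).symm
  obtain ⟨d, hd⟩ : ∃ d, Nat.find hescape = d + 1 :=
    ⟨_, (Nat.sub_add_cancel ((Nat.find_pos hescape).2 haζ.not_ge)).symm⟩
  have hlt : ∀ i ≤ d, f^[i] (f^[a] x) < ζ := fun i hi =>
    not_le.1 (Nat.find_min hescape (by omega))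
  refine exists_isPseudoCycle_of_escape (sub_eq_zero.1 hζ) hza haζ hlt (fun i hi => ?_)
    (hd ▸ Nat.find_spec hescape)
  have := hlt i hi
  rw [← iterate_add_apply] at this ⊢
  exact hbelow _ this

/-- Either the whole orbit moves towards the separating fixed point, or an orbit point beyond it
moves away and the orbit escapes. -/
theorem exists_center (hf : Continuous f) (hq : 1 < q) (h : HasOverPair f univ p q) :
    ∃ z, f z = z ∧ (HasCycleAboutZero (center f z) p q ∨
      ∀ k l m, 0 < k → k.Coprime l → 2 * k ≤ l → 0 < m →
        HasCycleAboutZero (center f z) (m * k) (m * l)) := by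
  obtain ⟨x, -, rfl, hcount⟩ := h
  obtain ⟨z, a, b, hz, -, hza, hmoves⟩ := exists_separating_fixedPoint hf hq
  refine ⟨z, hz, ?_⟩
  by_cases hinc : ∃ c, f^[a] x < f^[c] x ∧ f^[c] x < f (f^[c] x)
  · obtain ⟨c, hac, hc⟩ := hinc
    obtain ⟨u, N, hu, hfix, hchanges⟩ :=
      exists_isPseudoCycle_of_increasing hf hq hza hmoves hac hc
    exact Or.inr fun k l m hk hkl h2k hm =>
      (isCentered_center hf hz).hasCycleAboutZero_of_fixedPoint hu hfix hchanges hk hkl h2k hm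
  · push Not at hinc
    have hall : ∀ i, MovesToward f z (f^[i] x) := fun i => by
      rcases le_or_gt (f^[i] x) (f^[a] x) with h | h
      · exact hmoves i h
      · exact movesToward_of_gt (hza.trans h) ((hinc i h).lt_of_ne (apply_iterate_ne hq i))
    refine Or.inl ⟨x - z, minimalPeriod_center hall, fun i => ?_, ?_⟩
    · rw [iterate_center hall]
      exact sub_ne_zero.2 (hall i).ne
    · rw [← overCount_eq_changes_center hall, hcount]

end Reduction

section PeriodForcing

/-- Every continuous self-map of the real line with a point of period `n` has one of period `m`;
Sharkovskii's relation between `n` and `m`. -/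
def PeriodForces (n m : ℕ) : Prop :=
  ∀ g : ℝ → ℝ, Continuous g → (∃ x, minimalPeriod g x = n) → ∃ x, minimalPeriod g x = m

variable {F f g : ℝ → ℝ} {x : ℝ} {k l m n p q : ℕ}

lemma patternMap_abs (F : ℝ → ℝ) (x : ℝ) (n : ℕ) :
    patternMap F (fun i => sign (F^[i] x)) 0 n |x| = |F^[n] x| := by
  induction n with
  | zero => rfl
  | succ n ih =>
    rw [patternMap, ih, patternStep, Nat.zero_add, sign_mul_abs, ← iterate_succ_apply' F,
      sign_mul_self]
    exact max_eq_right (abs_nonneg _)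

lemma minimalPeriod_patternMap_abs (hx0 : x ≠ 0) (hl : 0 < l)
    (hσ : Periodic (fun i => sign (F^[i] x)) l) (hx : minimalPeriod F x = n * l) :
    minimalPeriod (patternMap F (fun i => sign (F^[i] x)) 0 l) |x| = n := by
  have hreturn : ∀ a, (F^[l])^[a] x =
      sign x * (patternMap F (fun i => sign (F^[i] x)) 0 l)^[a] |x| := fun a => by
    have hsign : sign (F^[l * a] x) = sign x :=
      eq_of_modEq_of_periodic hσ (Nat.modEq_zero_iff_dvd.2 (Nat.dvd_mul_right l a))
    rw [← patternMap_mul hσ, patternMap_abs, ← hsign, sign_mul_abs, iterate_mul]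
  have hsign0 : (sign x : ℝ) ≠ 0 := coe_ne_zero (sign_ne_zero.2 hx0)
  rw [← minimalPeriod_eq_of_injective (mul_right_injective₀ hsign0) hreturn,
    minimalPeriod_iterate_eq_div_gcd hl.ne', hx, Nat.gcd_mul_left_left, Nat.mul_div_cancel _ hl]

lemma exists_pos_minimalPeriod_eq (hg : Continuous g) (hg0 : g 0 = 0) (hnonneg : ∀ t, 0 ≤ g t)
    (hx : 0 < x) (hxn : 0 < minimalPeriod g x) (hm : 0 < m)
    (hforces : PeriodForces (minimalPeriod g x) m) : ∃ t, 0 < t ∧ minimalPeriod g t = m := by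
  have hiter : ∀ {t n}, 0 ≤ t → 0 ≤ g^[n] t := fun {t n} ht =>
    MapsTo.iterate (s := Ici 0) (fun s _ => hnonneg s) n ht
  rcases Nat.eq_or_lt_of_le hm with rfl | hm
  · rcases Nat.eq_or_lt_of_le hxn with h1 | h1
    · exact ⟨x, hx, h1.symm⟩
    · obtain ⟨z, a, b, hz, hbz, -⟩ := exists_separating_fixedPoint hg h1
      exact ⟨z, (hiter hx.le).trans_lt hbz, minimalPeriod_eq_one_iff_isFixedPt.2 hz⟩
  · obtain ⟨t, rfl⟩ := hforces g hg ⟨x, rfl⟩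
    refine ⟨t, lt_of_le_of_ne ?_ ?_, rfl⟩
    · obtain ⟨n, hn⟩ := Nat.exists_eq_add_of_lt hm
      rw [← iterate_minimalPeriod (f := g) (x := t), hn, iterate_succ_apply']
      exact hnonneg _
    · rintro rfl
      exact hm.ne' (minimalPeriod_eq_one_iff_isFixedPt.2 hg0)

theorem HasCycleAboutZero.of_periodForces (hF : Continuous F) (hF0 : F 0 = 0)
    (h : HasCycleAboutZero F (n * k) (n * l)) (hn : 0 < n) (hl : 0 < l) (hkl : k.Coprime l)
    (hm : 0 < m) (hforces : PeriodForces n m) : HasCycleAboutZero F (m * k) (m * l) := by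
  obtain ⟨x, hx, hx0, hchanges⟩ := h
  set σ : ℕ → SignType := fun i => sign (F^[i] x)
  by_cases hσ : Periodic σ l
  · have hσl : changes σ l = 2 * k := by
      rw [changes_mul hσ] at hchanges
      exact Nat.eq_of_mul_eq_mul_left hn (by linarith)
    have hx_pos : 0 < |x| := abs_pos.2 (hx0 0)
    have hmin : minimalPeriod (patternMap F σ 0 l) |x| = n :=
      minimalPeriod_patternMap_abs (hx0 0) hl hσ hx
    have hnonneg : ∀ t, 0 ≤ patternMap F σ 0 l t := by
      obtain ⟨l, rfl⟩ := Nat.exists_eq_add_of_lt hl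
      exact fun t => le_max_left _ _
    obtain ⟨t, ht, htm⟩ := exists_pos_minimalPeriod_eq (continuous_patternMap hF σ 0 l)
      (patternMap_zero_right hF0 σ 0 l) hnonneg hx_pos (by rwa [hmin]) hm
      (by rwa [hmin])
    exact hasCycleAboutZero_of_minimalPeriod_patternMap hF0
      (fun i => sign_ne_zero.2 (hx0 i)) hσ hσl hkl hl hm ht htm
  · have hu : IsPseudoCycle F (fun i => F^[i] x) (n * l) :=
      hx ▸ isPseudoCycle_iterate hx0 (hx ▸ Nat.mul_pos hn hl)
    exact hu.hasCycleAboutZero hF hF0 (by rw [hchanges]; ring) hkl hσ hm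

theorem hasOverPair_of_mul_lt_mul (hf : Continuous f) (h : HasOverPair f univ p q) (hp : 0 < p)
    (hkl : k.Coprime l) (h2k : 2 * k ≤ l) (hlt : p * l < k * q) (hm : 0 < m) :
    HasOverPair f univ (m * k) (m * l) := by
  have h2p := two_mul_le_of_hasOverPair h
  have hk : 0 < k := Nat.pos_of_mul_pos_right (Nat.zero_lt_of_lt hlt)
  obtain ⟨z, hz, hcycle | hall⟩ := exists_center hf (by omega) h
  · obtain ⟨x, hx, hx0, hchanges⟩ := hcycle
    subst hx
    exact HasCycleAboutZero.hasOverPair (by nlinarith) <|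
      (isCentered_center hf hz).hasCycleAboutZero (isPseudoCycle_iterate hx0 (by omega)) hchanges
        hp hkl h2k hlt hm
  · exact (hall k l m hk hkl h2k hm).hasOverPair (by nlinarith)

theorem hasOverPair_of_periodForces (hf : Continuous f)
    (h : HasOverPair f univ (n * k) (n * l)) (hn : 0 < n) (hk : 0 < k) (hkl : k.Coprime l)
    (h2k : 2 * k ≤ l) (hm : 0 < m) (hforces : PeriodForces n m) :
    HasOverPair f univ (m * k) (m * l) := by
  obtain ⟨z, hz, hcycle | hall⟩ := exists_center hf (by nlinarith) h
  · exact HasCycleAboutZero.hasOverPair (by nlinarith) <|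
      hcycle.of_periodForces (isCentered_center hf hz).continuous
        (isCentered_center hf hz).map_zero hn (by omega) hkl hm hforces
  · exact (hall k l m hk hkl h2k hm).hasOverPair (by nlinarith)

end PeriodForcing

section Sharkovskii

variable {c d k l m n : ℕ}

lemma periodForces_one (hn : 0 < n) : PeriodForces n 1 := by
  rintro g hg ⟨x, rfl⟩
  rcases Nat.eq_or_lt_of_le hn with h | h
  · exact ⟨x, h.symm⟩
  · obtain ⟨z, -, -, hz, -⟩ := exists_separating_fixedPoint hg h
    exact ⟨z, minimalPeriod_eq_one_iff_isFixedPt.2 hz⟩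

lemma periodForces_of_forall_mul_lt_mul (hn : 1 < n) (hkl : k.Coprime l) (h2k : 2 * k ≤ l)
    (hm : 0 < m) (hlt : ∀ p, 2 * p ≤ n → p * l < k * n) : PeriodForces n (m * l) := by
  rintro g hg ⟨x, rfl⟩
  obtain ⟨p, hp, h⟩ := exists_hasOverPair hg hn
  obtain ⟨y, -, hy, -⟩ := hasOverPair_of_mul_lt_mul hg h hp hkl h2k
    (hlt p (two_mul_le_of_hasOverPair h)) hm
  exact ⟨y, hy⟩

lemma PeriodForces.mul_two (h : PeriodForces n m) (hn : 0 < n) (hm : 0 < m) :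
    PeriodForces (n * 2) (m * 2) := by
  rintro g hg ⟨x, hx⟩
  obtain ⟨p, hp, hxp⟩ := exists_hasOverPair hg (x := x) (by omega)
  rw [hx] at hxp
  have hpn : p ≤ n := by linarith [two_mul_le_of_hasOverPair hxp]
  have key : HasOverPair g univ (m * 1) (m * 2) := by
    rcases hpn.lt_or_eq with hlt | rfl
    · exact hasOverPair_of_mul_lt_mul hg hxp hp (by norm_num) le_rfl (by omega) hm
    · exact hasOverPair_of_periodForces hg (by rwa [mul_one]) hn one_pos (by norm_num) le_rfl hm h
  obtain ⟨y, -, hy, -⟩ := key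
  exact ⟨y, hy⟩

lemma periodForces_odd_even (hc : 0 < c) (hm : 0 < m) : PeriodForces (2 * c + 1) (2 * m) := by
  rw [mul_comm 2 m]
  exact periodForces_of_forall_mul_lt_mul (by omega) (k := 1) (by norm_num) le_rfl hm
    fun p hp => by omega

lemma periodForces_odd_odd (hc : 0 < c) (hcd : c < d) :
    PeriodForces (2 * c + 1) (2 * d + 1) := by
  rw [← one_mul (2 * d + 1)]
  refine periodForces_of_forall_mul_lt_mul (k := d) (by omega) (by simp) (by omega) one_pos
    fun p hp => ?_
  have hpc : p ≤ c := by omega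
  nlinarith

lemma periodForces_total_odd (c d : ℕ) :
    PeriodForces (2 * c + 1) (2 * d + 1) ∨ PeriodForces (2 * d + 1) (2 * c + 1) := by
  wlog hcd : c ≤ d generalizing c d
  · exact (this d c (Nat.le_of_not_le hcd)).symm
  rcases Nat.eq_zero_or_pos c with rfl | hc
  · exact Or.inr (periodForces_one (by omega))
  · rcases hcd.lt_or_eq with hcd | rfl
    · exact Or.inl (periodForces_odd_odd hc hcd)
    · exact Or.inl fun _ _ h => h

lemma periodForces_total_odd_even (c : ℕ) (hm : 0 < m) :
    PeriodForces (2 * c + 1) (2 * m) ∨ PeriodForces (2 * m) (2 * c + 1) := by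
  rcases Nat.eq_zero_or_pos c with rfl | hc
  · exact Or.inr (periodForces_one (by omega))
  · exact Or.inl (periodForces_odd_even hc hm)

theorem periodForces_total (n m : ℕ) (hn : 0 < n) (hm : 0 < m) :
    PeriodForces n m ∨ PeriodForces m n := by
  induction n using Nat.strong_induction_on generalizing m with
  | _ n ih =>
    obtain ⟨c, rfl | rfl⟩ := n.even_or_odd' <;> obtain ⟨d, rfl | rfl⟩ := m.even_or_odd'
    · rw [mul_comm 2 c, mul_comm 2 d]
      exact (ih c (by omega) d (by omega) (by omega)).imp
        (fun h => h.mul_two (by omega) (by omega)) fun h => h.mul_two (by omega) (by omega)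
    · exact (periodForces_total_odd_even d (by omega)).symm
    · exact periodForces_total_odd_even c (by omega)
    · exact periodForces_total_odd c d

end Sharkovskii

section IntervalMaps

variable {f g : ℝ → ℝ} {I : Set ℝ} {x : ℝ} {k l m n p q r s : ℕ}

lemma iterate_eq_of_eqOn (hfg : EqOn f g I) (hg : MapsTo g I I) (hx : x ∈ I) (i : ℕ) :
    f^[i] x = g^[i] x := by
  induction i with
  | zero => rfl
  | succ i ih => rw [iterate_succ_apply', iterate_succ_apply', ih, hfg (hg.iterate i hx)]

lemma hasOverPair_congr (hfg : EqOn f g I) (hg : MapsTo g I I) :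
    HasOverPair f I p q ↔ HasOverPair g I p q := by
  refine exists_congr fun x => and_congr_right fun hx => ?_
  have hiter := iterate_eq_of_eqOn hfg hg hx
  have happly : ∀ i, f (g^[i] x) = g (g^[i] x) := fun i => hfg (hg.iterate i hx)
  rw [minimalPeriod_eq_of_injective injective_id hiter]
  simp only [overCount, hiter, happly]

lemma hasOverPair_of_univ (hI : ∀ t, f t ∈ I) (hq : 0 < q) (h : HasOverPair f univ p q) :
    HasOverPair f I p q := by
  obtain ⟨x, -, rfl, hcount⟩ := h
  obtain ⟨n, hn⟩ := Nat.exists_eq_add_of_lt hq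
  refine ⟨x, ?_, rfl, hcount⟩
  rw [← iterate_minimalPeriod (f := f) (x := x), hn, iterate_succ_apply']
  exact hI _

lemma orpForces_of_continuous (hs : 0 < s)
    (h : ∀ f : ℝ → ℝ, Continuous f → HasOverPair f univ p q → HasOverPair f univ r s) :
    OrpForces p q r s := by
  intro a b hab f hf hmaps hpq
  let g : ℝ → ℝ := IccExtend hab ((Icc a b).domRestrict f)
  have hg : Continuous g := hf.domRestrict.Icc_extend'
  have hgf : EqOn g f (Icc a b) := fun t ht => IccExtend_of_mem hab _ ht
  have hg_mem : ∀ t, g t ∈ Icc a b := fun t => hmaps (projIcc a b hab t).2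
  obtain ⟨x, -, hx⟩ := (hasOverPair_congr hgf hmaps).2 hpq
  exact (hasOverPair_congr hgf hmaps).1 <|
    hasOverPair_of_univ hg_mem hs (h g hg ⟨x, mem_univ x, hx⟩)

lemma exists_coprime_mul (hr : 0 < r) (hrs : 2 * r ≤ s) :
    ∃ m k l : ℕ, 0 < m ∧ 0 < k ∧ k.Coprime l ∧ 2 * k ≤ l ∧ r = m * k ∧ s = m * l := by
  obtain ⟨k, l, hkl, hk, hl⟩ := Nat.exists_coprime r s
  have hgcd : 0 < r.gcd s := Nat.gcd_pos_of_pos_left s hr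
  generalize r.gcd s = m at *
  subst hk hl
  exact ⟨m, k, l, hgcd, Nat.pos_of_mul_pos_right hr, hkl, by nlinarith, mul_comm _ _, mul_comm _ _⟩

theorem orpForces_of_mul_lt_mul (hp : 0 < p) (hr : 0 < r) (hrs : 2 * r ≤ s)
    (hlt : p * s < r * q) : OrpForces p q r s := by
  obtain ⟨m, k, l, hm, -, hkl, h2k, rfl, rfl⟩ := exists_coprime_mul hr hrs
  refine orpForces_of_continuous (by omega) fun f hf h =>
    hasOverPair_of_mul_lt_mul hf h hp hkl h2k ?_ hm
  nlinarith

theorem orpForces_of_periodForces (hn : 0 < n) (hk : 0 < k) (hkl : k.Coprime l) (h2k : 2 * k ≤ l)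
    (hm : 0 < m) (hforces : PeriodForces n m) : OrpForces (n * k) (n * l) (m * k) (m * l) :=
  orpForces_of_continuous (Nat.mul_pos hm (by omega)) fun _ hf h =>
    hasOverPair_of_periodForces hf h hn hk hkl h2k hm hforces

theorem orpForces_total_of_mul_eq_mul (hp : 0 < p) (hr : 0 < r) (hrs : 2 * r ≤ s)
    (heq : p * s = r * q) : OrpForces p q r s ∨ OrpForces r s p q := by
  obtain ⟨m, k, l, hm, hk, hkl, h2k, rfl, rfl⟩ := exists_coprime_mul hr hrs
  have hpl : p * l = k * q := Nat.eq_of_mul_eq_mul_left hm (by linarith)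
  obtain ⟨n, rfl⟩ : k ∣ p := hkl.dvd_of_dvd_mul_right ⟨q, hpl⟩
  obtain rfl : n * l = q := Nat.eq_of_mul_eq_mul_left hk (by linarith)
  have hn : 0 < n := Nat.pos_of_mul_pos_left hp
  rw [mul_comm k n]
  exact (periodForces_total n m hn hm).imp
    (orpForces_of_periodForces hn hk hkl h2k hm) (orpForces_of_periodForces hm hk hkl h2k hn)

end IntervalMaps

end OverRotation

/-- **Forcing among over-rotation pairs is a linear ordering.** -/
theorem orpForces_total (p q r s : ℕ) (hp : 0 < p) (hq : 0 < q) (hr : 0 < r) (hs : 0 < s)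
    (hpq : 2 * p ≤ q) (hrs : 2 * r ≤ s) :
    OrpForces p q r s ∨ OrpForces r s p q := by
  rcases lt_trichotomy (p * s) (r * q) with hlt | heq | hgt
  · exact Or.inl (OverRotation.orpForces_of_mul_lt_mul hp hr hrs hlt)
  · exact OverRotation.orpForces_total_of_mul_eq_mul hp hr hrs heq
  · exact Or.inr (OverRotation.orpForces_of_mul_lt_mul hr hp hpq hgt)
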